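/- Let C be a commutative Noetherian ring with Krull dimension D < ∞ and let A = C[x_1,…,x_n]. Then for every r ≥ max(3, D+2), every matrix g in the even split orthogonal group O(2r, A) can be reduced, by multiplying from the left by at most N = n(11r−7) + (nD + r(r−1)/2)·(r(r−1)/2 + ⌈(r−1)/2⌉ + 8r−2) + 10r−10 elementary orthogonal transvections, to a matrix of block-diagonal shape diag(1, β, 1) with β in O(2r−2, A) (β occupying the rows/columns indexed 2,…,r,−r,…,−2). -/

import Mathlib

open Matrix

section EvenDefs

variable {R : Type*} [CommRing R]

/-- In the basis `e_1,…,e_r,e_{-r},…,e_{-1}` of `R^{2r}` (0-indexed by `Fin (2*r)`),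
the position of `e_{-i}` given the position of `e_i` (and vice versa). -/
def negE (r : ℕ) (i : Fin (2 * r)) : Fin (2 * r) := ⟨2 * r - 1 - i.val, by omega⟩

/-- The split quadratic form `q(x) = ∑_{i=1}^r x_i x_{-i}` on `R^{2r}`. -/
def quadE (r : ℕ) (x : Fin (2 * r) → R) : R :=
  ∑ i : Fin r, x ⟨i.val, by omega⟩ * x ⟨2 * r - 1 - i.val, by omega⟩

/-- The even split orthogonal group `O(2r,R)`, as a set of matrices. -/
def OE (r : ℕ) (R : Type*) [CommRing R] : Set (Matrix (Fin (2 * r)) (Fin (2 * r)) R) :=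
  {g | IsUnit g ∧ ∀ x : Fin (2 * r) → R, quadE r (g.mulVec x) = quadE r x}

/-- The elementary orthogonal transvection `T_{i,j}(ξ) = e + ξ e_{i,j} - ξ e_{-j,-i}`. -/
def TE (r : ℕ) (i j : Fin (2 * r)) (ξ : R) : Matrix (Fin (2 * r)) (Fin (2 * r)) R :=
  1 + ξ • Matrix.single i j 1 - ξ • Matrix.single (negE r j) (negE r i) 1

/-- Being an elementary orthogonal transvection (even case): `T_{i,j}(ξ)` with `i ≠ ±j`. -/
def IsElemE (r : ℕ) (g : Matrix (Fin (2 * r)) (Fin (2 * r)) R) : Prop :=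
  ∃ i j : Fin (2 * r), ∃ ξ : R, i ≠ j ∧ i ≠ negE r j ∧ g = TE r i j ξ

/-- `EO(2r,R)^{≤N}` : products of at most `N` elementary orthogonal transvections. -/
def EOE (r N : ℕ) (R : Type*) [CommRing R] : Set (Matrix (Fin (2 * r)) (Fin (2 * r)) R) :=
  {g | ∃ L : List (Matrix (Fin (2 * r)) (Fin (2 * r)) R),
    L.length ≤ N ∧ (∀ m ∈ L, IsElemE r m) ∧ g = L.prod}

/-- `IUm_{2r}(R)` : isotropic unimodular columns. -/
def IUmE (r : ℕ) (R : Type*) [CommRing R] : Set (Fin (2 * r) → R) :=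
  {b | Ideal.span (Set.range b) = ⊤ ∧ quadE r b = 0}

end EvenDefs

universe u
theorem sel_lemma {R : Type*} [CommRing R] (F : Set (Ideal R)) (hF : F.Finite)
    (hp : ∀ Q ∈ F, Q.IsPrime) (hinc : ∀ P ∈ F, ∀ Q ∈ F, P ≤ Q → P = Q) (G : Ideal R → Prop) :
    ∃ ξ : R, ∀ Q ∈ F, (G Q → ξ ∉ Q) ∧ (¬ G Q → ξ ∈ Q) := by
  classical
  let s1 := hF.toFinset.filter G
  let s2 := hF.toFinset.filter (fun Q => ¬ G Q)
  let I : Ideal R := s2.inf id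
  have h : ¬ ((I : Set R) ⊆ ⋃ Q ∈ (s1 : Set (Ideal R)), (Q : Set R)) := by
    intro hs
    have hs := (Ideal.subset_union_prime (f := id) (s := s1) ⊥ ⊥ ?_).1 hs
    · obtain ⟨P, hP, hle⟩ := hs
      simp only [s1, Finset.mem_filter, Set.Finite.mem_toFinset] at hP
      obtain ⟨Q, hQ, hQP⟩ := ((hp P hP.1).inf_le' (s := s2) (f := id)).1 hle
      simp only [s2, Finset.mem_filter, Set.Finite.mem_toFinset] at hQ
      have := hinc Q hQ.1 P hP.1 hQP
      subst this
      exact hQ.2 hP.2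
    · intro i hi _ _
      simp only [s1, Finset.mem_filter, Set.Finite.mem_toFinset] at hi
      exact hp i hi.1
  rw [Set.not_subset] at h
  obtain ⟨ξ, h1, h2⟩ := h
  refine ⟨ξ, fun Q hQ => ⟨fun hG hx => h2 ?_, fun hG => ?_⟩⟩
  · simp only [Set.mem_iUnion]
    exact ⟨Q, by simp [s1, hQ, hG], hx⟩
  · have : I ≤ Q := Finset.inf_le (f := id) (by simp [s2, hQ, hG])
    exact this h1

theorem seq_lemma {R : Type*} [CommRing R] [IsNoetherianRing R] {κ : Type*} [DecidableEq κ]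
    (s : R) (a : κ → R) (S : Finset κ) :
    ∃ ξ : κ → R, ∀ P : Ideal R, P.IsPrime → (∀ j ∈ S, a j + ξ j * s ∈ P) → s ∉ P →
      ((S.card : ℕ) : ℕ∞) ≤ P.height := by
  induction S using Finset.induction_on with
  | empty => exact ⟨fun _ => 0, fun P _ _ _ => by simp⟩
  | insert j S hj ih =>
    obtain ⟨ξ, hξ⟩ := ih
    let I : Ideal R := Ideal.span ((fun i => a i + ξ i * s) '' S)
    obtain ⟨x, hx⟩ := sel_lemma {Q ∈ I.minimalPrimes | s ∉ Q}
      ((Ideal.finite_minimalPrimes_of_isNoetherianRing R I).subset (fun _ h => h.1))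
      (fun Q hQ => hQ.1.1.1)
      (fun P hP Q hQ h => le_antisymm h (hQ.1.2 ⟨hP.1.1.1, hP.1.1.2⟩ h)) (fun Q => a j ∈ Q)
    refine ⟨Function.update ξ j x, fun P hP hall hs => ?_⟩
    have hI : I ≤ P := by
      rw [Ideal.span_le]
      rintro _ ⟨i, hi, rfl⟩
      have := hall i (Finset.mem_insert_of_mem hi)
      rwa [Function.update_of_ne (by rintro rfl; exact hj hi)] at this
    obtain ⟨Q, hQ, hQP⟩ := Ideal.exists_minimalPrimes_le hI
    have hsQ : s ∉ Q := fun h => hs (hQP h)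
    have hQp : Q.IsPrime := hQ.1.1
    have h1 := hξ Q hQp (fun i hi => hQ.1.2 (Ideal.subset_span ⟨i, hi, rfl⟩)) hsQ
    have h2 : a j + x * s ∉ Q := by
      intro h
      by_cases hG : a j ∈ Q
      · have := (Ideal.add_mem_iff_right Q hG).1 h
        rcases hQp.mem_or_mem this with h | h
        · exact (hx Q ⟨hQ, hsQ⟩).1 hG h
        · exact hsQ h
      · exact hG ((Ideal.add_mem_iff_left Q (Q.mul_mem_right s ((hx Q ⟨hQ, hsQ⟩).2 hG))).1 h)
    have h3 : Q < P := lt_of_le_of_ne hQP (by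
      rintro rfl
      apply h2
      have := hall j (Finset.mem_insert_self _ _)
      rwa [Function.update_self] at this)
    rw [Finset.card_insert_of_notMem hj]
    push_cast
    exact (add_le_add_left h1 1).trans (Ideal.height_add_one_le_of_lt_of_isPrime h3)

open Polynomial in
attribute [local instance] Polynomial.algebra Polynomial.isLocalization in
theorem height_le_add_one {R : Type*} [CommRing R] [IsNoetherianRing R] (p : Ideal R)
    (P : Ideal R[X]) [P.IsPrime] [P.LiesOver p] : P.height ≤ p.height + 1 := by
  have : p.IsPrime := by rw [P.over_def p]; infer_instance
  let Rₚ := Localization.AtPrime p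
  set p' : Ideal Rₚ := p.map (algebraMap R Rₚ) with p'_def
  have : p'.IsMaximal := by
    rw [p'_def, Localization.AtPrime.map_eq_maximalIdeal]
    exact IsLocalRing.maximalIdeal.isMaximal Rₚ
  let P' : Ideal Rₚ[X] := P.map (algebraMap R[X] Rₚ[X])
  have disj : Disjoint (p.primeCompl.map C : Set R[X]) P := by
    refine Set.disjoint_left.mpr fun a ⟨b, hb⟩ ha ↦ hb.1 ?_
    rwa [SetLike.mem_coe, Ideal.LiesOver.over (P := P) (p := p), Ideal.mem_comap, algebraMap_eq,
      hb.2]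
  have hP' : P'.IsPrime := IsLocalization.isPrime_of_isPrime_disjoint (p.primeCompl.map C) _ _
    inferInstance disj
  have hlo : P'.LiesOver p' := IsLocalization.liesOver_of_isPrime_of_disjoint p.primeCompl _ _ disj
  have eq1 : p.height = p'.height := by
    rw [IsLocalization.height_map_of_disjoint p.primeCompl]
    exact Disjoint.symm <| Set.disjoint_left.mpr fun _ a b ↦ b a
  have eq2 : P.height = P'.height := by
    rw [IsLocalization.height_map_of_disjoint (Submonoid.map C <| p.primeCompl) _ disj]
  obtain ⟨M, hM, hle⟩ := Ideal.exists_le_maximal P' hP'.ne_top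
  have : M.LiesOver p' := ⟨by
    refine Ideal.IsMaximal.eq_of_le inferInstance ?_ ?_
    · exact (Ideal.IsPrime.under Rₚ M).ne_top
    · rw [hlo.over]; exact Ideal.comap_mono hle⟩
  rw [eq1, eq2, ← Polynomial.height_eq_height_add_one p' M]
  exact Ideal.height_mono hle

open Polynomial in
theorem lc_height_prime {R : Type*} [CommRing R] [IsNoetherianRing R] (P : Ideal R[X])
    [P.IsPrime] (p : Ideal R) [p.IsPrime] (h : P.leadingCoeff ≤ p) : P.height ≤ p.height := by
  let p0 : Ideal R := P.under R
  have hp0 : p0 ≤ p := by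
    intro x hx
    apply h
    rw [Ideal.mem_leadingCoeff]
    exact ⟨C x, hx, by simp⟩
  by_cases hPe : P = p0.map (algebraMap R R[X])
  · refine le_trans ?_ (Ideal.height_mono hp0)
    rw [Ideal.height_eq_height_add_of_liesOver_of_hasGoingDown p0]
    have : Ideal.map (Ideal.Quotient.mk (Ideal.map (algebraMap R R[X]) p0)) P = ⊥ := by
      rw [Ideal.map_eq_bot_iff_le_ker, Ideal.mk_ker, ← hPe]
    rw [this]
    have : (Ideal.map (algebraMap R R[X]) p0).IsPrime := by rw [← hPe]; infer_instance
    simp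
  · have hmap : p0.map (algebraMap R R[X]) ≤ P := Ideal.map_comap_le
    have hex : ∃ n, ∃ f ∈ P, f ∉ p0.map (algebraMap R R[X]) ∧ f.natDegree = n := by
      by_contra hcon
      push Not at hcon
      apply hPe
      refine le_antisymm (fun f hf => ?_) hmap
      by_contra hn
      exact hcon f.natDegree f hf hn rfl
    classical
    obtain ⟨f, hfP, hfn, hfd⟩ := Nat.find_spec hex
    have hlc : f.leadingCoeff ∉ p0 := by
      intro hl
      have hm : C f.leadingCoeff * X ^ f.natDegree ∈ p0.map (algebraMap R R[X]) :=
        Ideal.mul_mem_right _ _ (Ideal.mem_map_of_mem _ hl)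
      have he := eraseLead_add_C_mul_X_pow f
      have h1 : f.eraseLead ∈ P := by
        have : f.eraseLead = f - C f.leadingCoeff * X ^ f.natDegree := by
          rw [eq_sub_iff_add_eq, he]
        rw [this]; exact P.sub_mem hfP (hmap hm)
      have h2 : f.eraseLead ∉ p0.map (algebraMap R R[X]) := by
        intro h2
        apply hfn
        rw [← he]
        exact Ideal.add_mem _ h2 hm
      have h3 := eraseLead_natDegree_lt_or_eraseLead_eq_zero f
      rcases h3 with h3 | h3
      · exact Nat.find_min hex (hfd ▸ h3) ⟨_, h1, h2, rfl⟩
      · exact h2 (h3 ▸ Ideal.zero_mem _)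
    have hlt : p0 < p := lt_of_le_of_ne hp0 (by
      intro he
      apply hlc
      rw [he]
      apply h
      rw [Ideal.mem_leadingCoeff]
      exact ⟨f, hfP, rfl⟩)
    refine le_trans ?_ (Ideal.height_add_one_le_of_lt_of_isPrime hlt)
    exact height_le_add_one p0 P

open Polynomial in
theorem lc_height {R : Type*} [CommRing R] [IsNoetherianRing R] (I : Ideal R[X]) (h : ℕ∞)
    (hI : ∀ P : Ideal R[X], P.IsPrime → I ≤ P → h ≤ P.height) (p : Ideal R) [hp : p.IsPrime]
    (hIp : I.leadingCoeff ≤ p) : h ≤ p.height := by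
  classical
  by_contra hcon
  have key : ∀ P ∈ I.minimalPrimes, ∃ f ∈ P, f.leadingCoeff ∉ p := by
    intro P hP
    by_contra hc
    push Not at hc
    have : P.IsPrime := hP.1.1
    apply hcon
    refine (hI P hP.1.1 hP.1.2).trans (lc_height_prime P p ?_)
    intro x hx
    rw [Ideal.mem_leadingCoeff] at hx
    obtain ⟨f, hf, rfl⟩ := hx
    exact hc f hf
  choose! f hf1 hf2 using key
  let s := (Ideal.finite_minimalPrimes_of_isNoetherianRing R[X] I).toFinset
  have hs : ∀ P ∈ s, P ∈ I.minimalPrimes := by simp [s]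
  have hlc : ∏ P ∈ s, (f P).leadingCoeff ∉ p := by
    rw [Ideal.IsPrime.prod_mem_iff]
    push Not
    exact fun P hP => hf2 P (hs P hP)
  have hm : ∏ P ∈ s, f P ∈ I.radical := by
    rw [← Ideal.sInf_minimalPrimes, Ideal.mem_sInf]
    intro P hP
    exact Ideal.mem_of_dvd _ (Finset.dvd_prod_of_mem f (by simpa [s] using hP)) (hf1 P hP)
  obtain ⟨m, hm⟩ := hm
  have hne : ∀ k : ℕ, (∏ P ∈ s, (f P).leadingCoeff) ^ k ∉ p := fun k hk =>
    hlc (hp.mem_of_pow_mem _ hk)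
  have hne0 : ∀ k : ℕ, (∏ P ∈ s, (f P).leadingCoeff) ^ k ≠ 0 := fun k hk =>
    hne k (hk ▸ p.zero_mem)
  have e1 : (∏ P ∈ s, f P).leadingCoeff = ∏ P ∈ s, (f P).leadingCoeff :=
    leadingCoeff_prod' _ _ (by simpa using hne0 1)
  apply hne m
  apply hIp
  rw [Ideal.mem_leadingCoeff]
  exact ⟨_, hm, by rw [leadingCoeff_pow' (by rw [e1]; exact hne0 m), e1]⟩

open Polynomial in
theorem deg_bound {C : Type u} [CommRing C] {n : ℕ} (k : Fin n → ℕ) (hk : ∀ i, 2 ≤ k i)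
    (F : MvPolynomial (Fin n) C) : ∃ B : ℕ, ∀ (S : Type u) [CommRing S] [Algebra C S]
      (s : Fin n → S), (MvPolynomial.aeval (fun i => Polynomial.C (s i) * X + X ^ (k i)) F
        : S[X]).natDegree ≤ B := by
  induction F using MvPolynomial.induction_on with
  | C a =>
    refine ⟨0, fun S _ _ s => ?_⟩
    rw [MvPolynomial.aeval_C, Polynomial.algebraMap_apply, natDegree_C]
  | add p q hp hq =>
    obtain ⟨B, hB⟩ := hp
    obtain ⟨B', hB'⟩ := hq
    refine ⟨max B B', fun S _ _ s => ?_⟩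
    rw [map_add]
    exact (natDegree_add_le _ _).trans (max_le_max (hB S s) (hB' S s))
  | mul_X p i hp =>
    obtain ⟨B, hB⟩ := hp
    refine ⟨B + k i, fun S _ _ s => ?_⟩
    rw [map_mul, MvPolynomial.aeval_X]
    refine natDegree_mul_le.trans (add_le_add (hB S s) ?_)
    refine (natDegree_add_le _ _).trans (max_le ?_ (natDegree_X_pow_le _))
    refine (natDegree_C_mul_le _ _).trans (natDegree_X_le.trans (by have := hk i; omega))

open Polynomial in
theorem suslin_monic {C : Type u} [CommRing C] [IsNoetherianRing C] (h : ℕ∞)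
    (hC : ∀ p : Ideal C, p.IsPrime → ¬ h ≤ p.height) (n : ℕ) :
    ∀ I : Ideal (MvPolynomial (Fin n) C),
      (∀ P : Ideal (MvPolynomial (Fin n) C), P.IsPrime → I ≤ P → h ≤ P.height) →
      ∃ f ∈ I, ∃ k : Fin n → ℕ, (∀ i, 2 ≤ k i) ∧ ∀ (S : Type u) [CommRing S] [Algebra C S]
        (s : Fin n → S), (MvPolynomial.aeval (fun i => Polynomial.C (s i) * X + X ^ (k i)) f
          : S[X]).Monic := by
  induction n with
  | zero =>
    intro I hI
    have : I = ⊤ := by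
      by_contra hne
      obtain ⟨M, hM, hle⟩ := Ideal.exists_le_maximal I hne
      have h1 := hI M hM.isPrime hle
      let e : MvPolynomial (Fin 0) C ≃+* C := (MvPolynomial.isEmptyRingEquiv C (Fin 0))
      have h2 := e.symm.height_comap M
      have := hM.isPrime
      exact hC (M.comap e.symm) inferInstance (h2 ▸ h1)
    exact ⟨1, this ▸ Submodule.mem_top, Fin.elim0, fun i => i.elim0, fun S _ _ s => by
      rw [map_one]; exact monic_one⟩
  | succ n ih =>
    intro I hI
    let e : MvPolynomial (Fin (n+1)) C ≃+* (MvPolynomial (Fin n) C)[X] :=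
      (MvPolynomial.finSuccEquiv C n).toRingEquiv
    let J : Ideal ((MvPolynomial (Fin n) C)[X]) := I.comap e.symm
    have hJ : ∀ P : Ideal ((MvPolynomial (Fin n) C)[X]), P.IsPrime → J ≤ P → h ≤ P.height := by
      intro P hP hle
      rw [← e.height_comap P]
      refine hI _ inferInstance ?_
      intro x hx
      apply hle
      simpa [J] using hx
    obtain ⟨f', hf', k', hk', hmon⟩ := ih J.leadingCoeff (fun p hp hle => lc_height J h hJ p hle)
    rw [Ideal.mem_leadingCoeff] at hf'
    obtain ⟨F, hF, rfl⟩ := hf'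
    choose B hB using fun m => deg_bound k' hk' (F.coeff m)
    let k0 : ℕ := (∑ m ∈ Finset.range F.natDegree, B m) + 2
    refine ⟨e.symm F, hF, Fin.cons k0 k', ?_, ?_⟩
    · intro i
      refine Fin.cases ?_ (fun i => ?_) i
      · simp [k0]
      · simpa using hk' i
    · intro S _ _ s
      rcases subsingleton_or_nontrivial S with hsub | hnt
      · exact Subsingleton.elim _ _
      set y0 : S[X] := Polynomial.C (s 0) * X + X ^ k0 with hy0
      have hd0 : (Polynomial.C (s 0) * X : S[X]).degree < (k0 : WithBot ℕ) :=
        (degree_C_mul_X_le _).trans_lt (by exact_mod_cast (by omega : 1 < k0))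
      have hm0 : y0.Monic := by
        rw [hy0, add_comm]; exact monic_X_pow_add hd0
      have hdeg0 : y0.natDegree = k0 := by
        rw [hy0, add_comm, natDegree_eq_of_degree_eq_some]
        rw [degree_add_eq_left_of_degree_lt (by rwa [degree_X_pow]), degree_X_pow]
      set ψ := (MvPolynomial.aeval (R := C)
        (fun i => Polynomial.C (s (Fin.succ i)) * X + X ^ (k' i) : Fin n → S[X])) with hψ
      have heq : (MvPolynomial.aeval (fun i => Polynomial.C (s i) * X + X ^ ((Fin.cons k0 k' : Fin (n+1) → ℕ) i)) (e.symm F)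
          : S[X]) = F.eval₂ (ψ : _ →+* S[X]) y0 := by
        have : ((MvPolynomial.aeval (R := C) (fun i => Polynomial.C (s i) * X + X ^ ((Fin.cons k0 k' : Fin (n+1) → ℕ) i) : Fin (n+1) → S[X])) : _ →+* S[X]) =
          (Polynomial.eval₂RingHom (ψ : _ →+* S[X]) y0).comp e.toRingHom := by
          apply MvPolynomial.ringHom_ext
          · intro c
            simp [e, MvPolynomial.finSuccEquiv_apply]
          · intro i
            refine Fin.cases ?_ (fun i => ?_) i
            · simp [hy0, e, MvPolynomial.finSuccEquiv_X_zero]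
            · simp [hψ, e, MvPolynomial.finSuccEquiv_X_succ]
        have h2 := congrArg (fun φ : _ →+* S[X] => φ (e.symm F)) this
        simpa using h2
      rw [heq, eval₂_eq_sum_range, Finset.sum_range_succ, add_comm]
      have hlead : ((ψ : _ →+* S[X]) (F.coeff F.natDegree) * y0 ^ F.natDegree).Monic :=
        (hmon S (fun i => s i.succ)).mul (hm0.pow _)
      refine hlead.add_of_left ?_
      refine (degree_sum_le _ _).trans_lt ?_
      rw [Finset.sup_lt_iff (by
        rw [bot_lt_iff_ne_bot, Ne, degree_eq_bot]; exact hlead.ne_zero)]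
      intro m hm
      have h1 : ((ψ : _ →+* S[X]) (F.coeff m) * y0 ^ m).natDegree ≤ B m + m * k0 := by
        refine natDegree_mul_le.trans (add_le_add (hB m S _) ?_)
        rw [hm0.natDegree_pow, hdeg0]
      have h2 : B m ≤ ∑ m ∈ Finset.range F.natDegree, B m :=
        Finset.single_le_sum (f := B) (fun _ _ => Nat.zero_le _) hm
      have h3 : B m + m * k0 < ((ψ : _ →+* S[X]) (F.coeff F.natDegree) * y0 ^ F.natDegree).natDegree := by
        have hmm : ((ψ : _ →+* S[X]) (F.coeff F.natDegree)).Monic := hmon S (fun i => s i.succ)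
        rw [hmm.natDegree_mul (hm0.pow _), hm0.natDegree_pow, hdeg0]
        have : m + 1 ≤ F.natDegree := Finset.mem_range.1 hm
        have := Nat.mul_le_mul_right k0 this
        have : (m+1) * k0 = m * k0 + k0 := by ring
        omega
      refine (degree_le_natDegree).trans_lt ?_
      rw [degree_eq_natDegree hlead.ne_zero]
      exact_mod_cast h1.trans_lt h3

section ReachDefs

/-- Elementary steps on pairs of coordinate vectors. -/
inductive Stp {R ι : Type*} [CommRing R] [DecidableEq ι] :
    (ι → R) → (ι → R) → (ι → R) → (ι → R) → Prop
  | s1 (a b : ι → R) (i j : ι) (ξ : R) (h : i ≠ j) :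
      Stp a b (Function.update a i (a i + ξ * a j)) (Function.update b j (b j - ξ * b i))
  | s2 (a b : ι → R) (i j : ι) (ξ : R) (h : i ≠ j) :
      Stp a b (Function.update (Function.update a i (a i + ξ * b j)) j (a j - ξ * b i)) b
  | s3 (a b : ι → R) (i j : ι) (ξ : R) (h : i ≠ j) :
      Stp a b a (Function.update (Function.update b i (b i + ξ * a j)) j (b j - ξ * a i))

/-- Reachability by at most `m` elementary steps. -/
inductive Reach {R ι : Type*} [CommRing R] [DecidableEq ι] :
    ℕ → (ι → R) → (ι → R) → (ι → R) → (ι → R) → Prop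
  | refl (m : ℕ) (a b : ι → R) : Reach m a b a b
  | tail {m : ℕ} {a b a' b' a'' b'' : ι → R} :
      Reach m a b a' b' → Stp a' b' a'' b'' → Reach (m + 1) a b a'' b''

/-- Unimodularity, in terms of prime ideals. -/
def UniP {R ι : Type*} [CommRing R] (a b : ι → R) : Prop :=
  ∀ P : Ideal R, P.IsPrime → (∀ i, a i ∈ P) → (∀ i, b i ∈ P) → False

end ReachDefs

set_option linter.unusedSectionVars false
set_option linter.unusedSimpArgs false
set_option linter.unusedVariables false

section ReachLemmas

variable {R ι : Type*} [CommRing R] [DecidableEq ι]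

theorem Reach.mono {m m' : ℕ} {a b a' b' : ι → R} (h : Reach m a b a' b') (hm : m ≤ m') :
    Reach m' a b a' b' := by
  induction h generalizing m' with
  | refl => exact Reach.refl _ _ _
  | tail h s ih =>
    obtain ⟨k, rfl⟩ : ∃ k, m' = k + 1 := ⟨m' - 1, by omega⟩
    exact Reach.tail (ih (by omega)) s

theorem Reach.trans {m m' : ℕ} {a b a' b' a'' b'' : ι → R} (h : Reach m a b a' b')
    (h' : Reach m' a' b' a'' b'') : Reach (m + m') a b a'' b'' := by
  induction h' with
  | refl => exact h.mono (by omega)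
  | tail h2 s ih => exact Reach.tail (ih h) s

theorem Reach.one {a b a' b' : ι → R} (h : Stp a b a' b') : Reach 1 a b a' b' :=
  Reach.tail (Reach.refl 0 _ _) h

theorem Reach.s1 {a b a' b' : ι → R} (i j : ι) (ξ : R) (h : i ≠ j)
    (h1 : a' i = a i + ξ * a j) (h2 : ∀ k, k ≠ i → a' k = a k)
    (h3 : b' j = b j - ξ * b i) (h4 : ∀ k, k ≠ j → b' k = b k) : Reach 1 a b a' b' := by
  have := Reach.one (Stp.s1 a b i j ξ h)
  convert this using 1
  · funext k
    by_cases hk : k = i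
    · subst hk; simp [h1]
    · simp [hk, h2 k hk]
  · funext k
    by_cases hk : k = j
    · subst hk; simp [h3]
    · simp [hk, h4 k hk]

theorem Reach.s2 {a b a' b' : ι → R} (i j : ι) (ξ : R) (h : i ≠ j)
    (h1 : a' i = a i + ξ * b j) (h2 : a' j = a j - ξ * b i) (h3 : ∀ k, k ≠ i → k ≠ j → a' k = a k)
    (h4 : b' = b) : Reach 1 a b a' b' := by
  have := Reach.one (Stp.s2 a b i j ξ h)
  convert this using 1
  funext k
  by_cases hk : k = i
  · subst hk; simp [h1, h]
  · by_cases hk' : k = j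
    · subst hk'; simp [h2]
    · simp [hk, hk', h3 k hk hk']

theorem Stp.swap {a b a' b' : ι → R} (h : Stp a b a' b') : Reach 1 b a b' a' := by
  cases h with
  | s1 i j ξ h =>
    refine Reach.s1 j i (-ξ) (Ne.symm h) ?_ ?_ ?_ ?_
    · simp; ring
    · intro k hk; simp [hk]
    · simp
    · intro k hk; simp [hk]
  | s2 i j ξ h => exact Reach.one (Stp.s3 _ _ _ _ _ h)
  | s3 i j ξ h => exact Reach.one (Stp.s2 _ _ _ _ _ h)

theorem Reach.swap {m : ℕ} {a b a' b' : ι → R} (h : Reach m a b a' b') : Reach m b a b' a' := by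
  induction h with
  | refl => exact Reach.refl _ _ _
  | tail h s ih => exact ih.trans s.swap

theorem Reach.s3 {a b a' b' : ι → R} (i j : ι) (ξ : R) (h : i ≠ j)
    (h1 : b' i = b i + ξ * a j) (h2 : b' j = b j - ξ * a i) (h3 : ∀ k, k ≠ i → k ≠ j → b' k = b k)
    (h4 : a' = a) : Reach 1 a b a' b' :=
  (Reach.s2 (a := b) (b := a) i j ξ h h1 h2 h3 h4).swap

theorem Stp.symm {a b a' b' : ι → R} (h : Stp a b a' b') : Reach 1 a' b' a b := by
  cases h with
  | s1 i j ξ h =>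
    refine Reach.s1 i j (-ξ) h ?_ ?_ ?_ ?_
    · simp [h.symm]
    · intro k hk; simp [hk]
    · simp [h]
    · intro k hk; simp [hk]
  | s2 i j ξ h =>
    refine Reach.s2 i j (-ξ) h ?_ ?_ ?_ rfl
    · simp [h]
    · simp
    · intro k hk hk'; simp [hk, hk']
  | s3 i j ξ h =>
    refine Reach.s3 i j (-ξ) h ?_ ?_ ?_ rfl
    · simp [h]
    · simp
    · intro k hk hk'; simp [hk, hk']

theorem Reach.symm {m : ℕ} {a b a' b' : ι → R} (h : Reach m a b a' b') : Reach m a' b' a b := by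
  induction h with
  | refl => exact Reach.refl _ _ _
  | tail h s ih => exact (s.symm.trans ih).mono (by omega)

theorem Reach.map {S : Type*} [CommRing S] (f : R →+* S) {m : ℕ} {a b a' b' : ι → R}
    (h : Reach m a b a' b') :
    Reach m (fun i => f (a i)) (fun i => f (b i)) (fun i => f (a' i)) (fun i => f (b' i)) := by
  induction h with
  | refl => exact Reach.refl _ _ _
  | tail h s ih =>
    refine ih.trans ?_
    cases s with
    | s1 i j ξ h =>
      refine Reach.s1 i j (f ξ) h ?_ ?_ ?_ ?_
      · simp
      · intro k hk; simp [hk]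
      · simp
      · intro k hk; simp [hk]
    | s2 i j ξ h =>
      refine Reach.s2 i j (f ξ) h ?_ ?_ ?_ rfl
      · simp [h]
      · simp
      · intro k hk hk'; simp [hk, hk']
    | s3 i j ξ h =>
      refine Reach.s3 i j (f ξ) h ?_ ?_ ?_ rfl
      · simp [h]
      · simp
      · intro k hk hk'; simp [hk, hk']

theorem Reach.mem {m : ℕ} {a b a' b' : ι → R} (h : Reach m a b a' b') (P : Ideal R) :
    ((∀ i, a i ∈ P) ∧ (∀ i, b i ∈ P)) → ((∀ i, a' i ∈ P) ∧ (∀ i, b' i ∈ P)) := by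
  intro h0
  induction h with
  | refl => exact h0
  | tail h s ih =>
    obtain ⟨ha, hb⟩ := ih h0
    cases s with
    | s1 i j ξ h =>
      refine ⟨fun k => ?_, fun k => ?_⟩ <;> rw [Function.update_apply] <;> split_ifs
      · exact P.add_mem (ha _) (P.mul_mem_left _ (ha _))
      · exact ha _
      · exact P.sub_mem (hb _) (P.mul_mem_left _ (hb _))
      · exact hb _
    | s2 i j ξ h =>
      refine ⟨fun k => ?_, hb⟩
      rw [Function.update_apply, Function.update_apply]; split_ifs
      · exact P.sub_mem (ha _) (P.mul_mem_left _ (hb _))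
      · exact P.add_mem (ha _) (P.mul_mem_left _ (hb _))
      · exact ha _
    | s3 i j ξ h =>
      refine ⟨ha, fun k => ?_⟩
      rw [Function.update_apply, Function.update_apply]; split_ifs
      · exact P.sub_mem (hb _) (P.mul_mem_left _ (ha _))
      · exact P.add_mem (hb _) (P.mul_mem_left _ (ha _))
      · exact hb _

theorem Reach.uni {m : ℕ} {a b a' b' : ι → R} (h : Reach m a b a' b') (hu : UniP a b) :
    UniP a' b' := fun P hP h1 h2 =>
  have := h.symm.mem P ⟨h1, h2⟩
  hu P hP this.1 this.2

theorem UniP.map {S : Type*} [CommRing S] (f : R →+* S) {a b : ι → R} (hu : UniP a b) :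
    UniP (fun i => f (a i)) (fun i => f (b i)) := fun P hP h1 h2 =>
  hu (P.comap f) inferInstance h1 h2

theorem sum_update_aux [Fintype ι] (f g : ι → R) (i j : ι) (h : i ≠ j)
    (hk : ∀ k, k ≠ i → k ≠ j → f k = g k) (hs : f i + f j = g i + g j) :
    ∑ k, f k = ∑ k, g k := by
  rw [← sub_eq_zero, ← Finset.sum_sub_distrib]
  rw [Finset.sum_eq_add i j h]
  · linear_combination hs
  · intro k _ hk'
    rw [hk k hk'.1 hk'.2, sub_self]
  · simp
  · simp

theorem Reach.quad [Fintype ι] {m : ℕ} {a b a' b' : ι → R} (h : Reach m a b a' b') :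
    ∑ i, a' i * b' i = ∑ i, a i * b i := by
  induction h with
  | refl => rfl
  | tail h s ih =>
    rw [← ih]
    cases s with
    | s1 i j ξ h =>
      refine sum_update_aux _ _ i j h (fun k h1 h2 => by simp [h1, h2]) ?_
      simp [h, h.symm]; ring
    | s2 i j ξ h =>
      refine sum_update_aux _ _ i j h (fun k h1 h2 => by simp [h1, h2]) ?_
      simp [h, h.symm]; ring
    | s3 i j ξ h =>
      refine sum_update_aux _ _ i j h (fun k h1 h2 => by simp [h1, h2]) ?_
      simp [h, h.symm]; ring

theorem Reach.m1_aux (a b : ι → R) (k : ι) (ξ : ι → R) (S : Finset ι) (hk : k ∉ S) :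
    Reach S.card a b (fun j => if j ∈ S then a j + ξ j * a k else a j)
      (Function.update b k (b k - ∑ j ∈ S, ξ j * b j)) := by
  induction S using Finset.induction_on with
  | empty => simpa using Reach.refl 0 a b
  | insert i S hi ih =>
    have hki : k ≠ i := fun h => hk (by simp [h])
    have hkS : k ∉ S := fun h => hk (Finset.mem_insert_of_mem h)
    rw [Finset.card_insert_of_notMem hi]
    refine (ih hkS).trans (Reach.s1 i k (ξ i) hki.symm ?_ ?_ ?_ ?_)
    · simp [hi, hkS]
    · intro j hj; simp [hj]
    · simp [Finset.sum_insert hi, hki.symm]; ring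
    · intro j hj; simp [hj]

theorem Reach.m2_aux (a b : ι → R) (k : ι) (ξ : ι → R) (S : Finset ι) (hk : k ∉ S) :
    Reach S.card a b (fun j => if j = k then a k - ∑ j ∈ S, ξ j * b j else
      if j ∈ S then a j + ξ j * b k else a j) b := by
  induction S using Finset.induction_on with
  | empty =>
    rw [Finset.card_empty]
    convert Reach.refl 0 a b using 1
    funext j
    by_cases h : j = k <;> simp [h]
  | insert i S hi ih =>
    have hki : k ≠ i := fun h => hk (by simp [h])
    have hkS : k ∉ S := fun h => hk (Finset.mem_insert_of_mem h)
    rw [Finset.card_insert_of_notMem hi]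
    refine (ih hkS).trans (Reach.s2 i k (ξ i) hki.symm ?_ ?_ ?_ rfl)
    · simp [hi, hki.symm]
    · simp [Finset.sum_insert hi]; ring
    · intro j hj hj'; simp [hj, hj']

variable [Fintype ι]

/-- `a_j += ξ_j a_k`, `b_k -= Σ ξ_j b_j`. -/
theorem Reach.m1 (a b : ι → R) (k : ι) (ξ : ι → R) (hξ : ξ k = 0) :
    Reach (Fintype.card ι - 1) a b (fun j => a j + ξ j * a k)
      (Function.update b k (b k - ∑ j, ξ j * b j)) := by
  have := Reach.m1_aux a b k ξ (Finset.univ.erase k) (by simp)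
  rw [Finset.card_erase_of_mem (Finset.mem_univ _), Finset.card_univ] at this
  convert this using 1
  · funext j
    by_cases h : j = k
    · subst h; simp [hξ]
    · simp [h]
  · congr 2
    rw [← Finset.add_sum_erase _ _ (Finset.mem_univ k)]; simp [hξ]

/-- `a_j += ξ_j b_k`, `a_k -= Σ ξ_j b_j`. -/
theorem Reach.m2 (a b : ι → R) (k : ι) (ξ : ι → R) (hξ : ξ k = 0) :
    Reach (Fintype.card ι - 1) a b
      (fun j => if j = k then a k - ∑ j, ξ j * b j else a j + ξ j * b k) b := by
  have := Reach.m2_aux a b k ξ (Finset.univ.erase k) (by simp)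
  rw [Finset.card_erase_of_mem (Finset.mem_univ _), Finset.card_univ] at this
  convert this using 1
  funext j
  by_cases h : j = k
  · subst h; simp only [if_true]
    congr 1
    rw [← Finset.add_sum_erase _ _ (Finset.mem_univ j)]; simp [hξ]
  · simp [h]

end ReachLemmas

section HLem
variable {R ι : Type*} [CommRing R] [DecidableEq ι] [Fintype ι]

theorem h_stage [IsNoetherianRing R] (a b : ι → R) (S : Finset ι) (k : ι)
    (hinv : ∀ P : Ideal R, P.IsPrime → ¬ (((Fintype.card ι - 1 : ℕ) : ℕ∞) ≤ P.height) →
      (∀ i, a i ∈ P) → ∀ j ∈ S, b j ∈ P) :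
    ∃ a2 b2 : ι → R, Reach (2 * (Fintype.card ι - 1)) a b a2 b2 ∧
      ∀ P : Ideal R, P.IsPrime → ¬ (((Fintype.card ι - 1 : ℕ) : ℕ∞) ≤ P.height) →
        (∀ j, j ≠ k → a2 j ∈ P) →
          (∀ j ∈ insert k S, b2 j ∈ P) ∧ ((∀ j, b2 j ∈ P) → ∀ j, a2 j ∈ P) := by
  have hc : (Finset.univ.erase k).card = Fintype.card ι - 1 := by
    rw [Finset.card_erase_of_mem (Finset.mem_univ _), Finset.card_univ]
  obtain ⟨ξ, hξ⟩ := seq_lemma (a k) a (Finset.univ.erase k)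
  set ξ' := Function.update ξ k 0 with hξ'
  set a1 : ι → R := fun j => a j + ξ' j * a k with ha1
  set b1 : ι → R := Function.update b k (b k - ∑ j, ξ' j * b j) with hb1
  have r1 : Reach _ a b a1 b1 := Reach.m1 a b k ξ' (by simp [hξ'])
  obtain ⟨η, hη⟩ := seq_lemma (b1 k) a1 (Finset.univ.erase k)
  set η' := Function.update η k 0 with hη'
  have r2 := Reach.m2 a1 b1 k η' (by simp [hη'])
  refine ⟨_, _, (r1.trans r2).mono (by omega), ?_⟩
  intro P hP hht hall
  rw [hc] at hξ hη
  have h2 : ∀ j, j ≠ k → a1 j + η j * b1 k ∈ P := by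
    intro j hj
    have := hall j hj
    simpa [hj, hη'] using this
  have h3 : b1 k ∈ P := by
    by_contra hb
    exact hht (hη P hP (fun j hj => h2 j (Finset.ne_of_mem_erase hj)) hb)
  have h4 : ∀ j, j ≠ k → a j + ξ j * a k ∈ P := by
    intro j hj
    have h := h2 j hj
    rw [Ideal.add_mem_iff_left P (P.mul_mem_left _ h3)] at h
    simpa [ha1, hξ', hj] using h
  have h5 : a k ∈ P := by
    by_contra hb
    exact hht (hξ P hP (fun j hj => h4 j (Finset.ne_of_mem_erase hj)) hb)
  have h6 : ∀ j, a j ∈ P := by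
    intro j
    by_cases hj : j = k
    · rw [hj]; exact h5
    · have h := h4 j hj
      rwa [Ideal.add_mem_iff_left P (P.mul_mem_left _ h5)] at h
  have h7 := hinv P hP hht h6
  constructor
  · intro j hj
    by_cases hjk : j = k
    · rw [hjk]; exact h3
    · have : j ∈ S := by simpa [hjk] using hj
      simpa [hb1, hjk] using h7 j this
  · intro hb j
    by_cases hjk : j = k
    · subst hjk
      simp only [if_true]
      refine P.sub_mem ?_ (P.sum_mem fun i _ => P.mul_mem_left _ (hb i))
      simpa [ha1, hξ'] using h5
    · exact hall j hjk

theorem h_iter [IsNoetherianRing R] (a b : ι → R) (S : Finset ι) :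
    ∃ a2 b2 : ι → R, Reach (S.card * (2 * (Fintype.card ι - 1))) a b a2 b2 ∧
      ∀ P : Ideal R, P.IsPrime → ¬ (((Fintype.card ι - 1 : ℕ) : ℕ∞) ≤ P.height) →
      (∀ i, a2 i ∈ P) → ∀ j ∈ S, b2 j ∈ P := by
  induction S using Finset.induction_on with
  | empty => exact ⟨a, b, Reach.refl _ _ _, by simp⟩
  | insert k S hk ih =>
    obtain ⟨a1, b1, r1, h1⟩ := ih
    obtain ⟨a2, b2, r2, h2⟩ := h_stage a1 b1 S k h1
    refine ⟨a2, b2, (r1.trans r2).mono ?_, fun P hP hht hall => (h2 P hP hht fun j _ => hall j).1⟩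
    rw [Finset.card_insert_of_notMem hk, add_mul, one_mul]

theorem h_lemma [IsNoetherianRing R] (a b : ι → R) (hu : UniP a b) (x0 : ι) :
    ∃ a2 b2 : ι → R, Reach (Fintype.card ι * (2 * (Fintype.card ι - 1))) a b a2 b2 ∧
      ∀ P : Ideal R, P.IsPrime → (∀ j, j ≠ x0 → a2 j ∈ P) →
        ((Fintype.card ι - 1 : ℕ) : ℕ∞) ≤ P.height := by
  obtain ⟨a1, b1, r1, h1⟩ := h_iter a b (Finset.univ.erase x0)
  obtain ⟨a2, b2, r2, h2⟩ := h_stage a1 b1 _ x0 h1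
  have hpos : 0 < Fintype.card ι := Fintype.card_pos_iff.2 ⟨x0⟩
  have hr : Reach (Fintype.card ι * (2 * (Fintype.card ι - 1))) a b a2 b2 := by
    refine (r1.trans r2).mono ?_
    rw [Finset.card_erase_of_mem (Finset.mem_univ _), Finset.card_univ]
    obtain ⟨c, hc⟩ : ∃ c, Fintype.card ι = c + 1 := ⟨_, (Nat.succ_pred_eq_of_pos hpos).symm⟩
    rw [hc]; simp only [Nat.add_sub_cancel]; apply le_of_eq; ring
  refine ⟨a2, b2, hr, fun P hP hall => ?_⟩
  by_contra hht
  obtain ⟨h3, h4⟩ := h2 P hP hht hall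
  have hb : ∀ j, b2 j ∈ P := fun j => h3 j (by simp)
  exact hr.uni hu P hP (h4 hb) hb

end HLem

section CoreLem
variable {R ι : Type*} [CommRing R] [DecidableEq ι]

/-- Change three coordinates of a vector. -/
def upd3 (a : ι → R) (x y z : ι) (α β γ : R) : ι → R :=
  fun k => if k = x then α else if k = y then β else if k = z then γ else a k

theorem cross2 (a b : ι → R) (x y z : ι) (hxy : x ≠ y) (hxz : x ≠ z) (hyz : y ≠ z)
    (h1 h2 h3 : R) :
    Reach 3 a b (upd3 a x y z (a x + (h2 * b z - h3 * b y)) (a y + (h3 * b x - h1 * b z))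
      (a z + (h1 * b y - h2 * b x))) b := by
  have r1 : Reach 1 a b (upd3 a x y z (a x - h3 * b y) (a y + h3 * b x) (a z)) b := by
    refine Reach.s2 x y (-h3) hxy ?_ ?_ ?_ rfl
    · simp [upd3]; ring
    · simp [upd3, hxy.symm]
    · intro k h1 h2
      simp only [upd3, if_neg h1, if_neg h2]
      split_ifs with h <;> simp [h]
  have r2 : Reach 1 (upd3 a x y z (a x - h3 * b y) (a y + h3 * b x) (a z)) b
      (upd3 a x y z (a x - h3 * b y) (a y + (h3 * b x - h1 * b z)) (a z + h1 * b y)) b := by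
    refine Reach.s2 y z (-h1) hyz ?_ ?_ ?_ rfl
    · simp [upd3, hxy.symm]; ring
    · simp [upd3, hxz.symm, hyz.symm]
    · intro k h1 h2
      simp only [upd3, if_neg h1, if_neg h2]
  have r3 : Reach 1 (upd3 a x y z (a x - h3 * b y) (a y + (h3 * b x - h1 * b z)) (a z + h1 * b y)) b
      (upd3 a x y z (a x + (h2 * b z - h3 * b y)) (a y + (h3 * b x - h1 * b z))
      (a z + (h1 * b y - h2 * b x))) b := by
    refine Reach.s2 z x (-h2) hxz.symm ?_ ?_ ?_ rfl
    · simp [upd3, hxz.symm, hyz.symm]; ring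
    · simp [upd3]; ring
    · intro k h1 h2
      simp only [upd3, if_neg h1, if_neg h2]
  exact (r1.trans r2).trans r3

theorem comm_step (a b : ι → R) (x y z : ι) (hxy : x ≠ y) (hxz : x ≠ z) (hyz : y ≠ z)
    (h1 h2 h3 ρ1 ρ2 ρ3 : R) (hρ : h1 * ρ1 + h2 * ρ2 + h3 * ρ3 = 0) :
    Reach 12 a b
      (upd3 a x y z (a x + h1 * (ρ1 * a x + ρ2 * a y + ρ3 * a z))
        (a y + h2 * (ρ1 * a x + ρ2 * a y + ρ3 * a z))
        (a z + h3 * (ρ1 * a x + ρ2 * a y + ρ3 * a z)))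
      (upd3 b x y z (b x - ρ1 * (h1 * b x + h2 * b y + h3 * b z))
        (b y - ρ2 * (h1 * b x + h2 * b y + h3 * b z))
        (b z - ρ3 * (h1 * b x + h2 * b y + h3 * b z))) := by
  have hyx := hxy.symm
  have hzx := hxz.symm
  have hzy := hyz.symm
  have r1 := cross2 a b x y z hxy hxz hyz ρ1 ρ2 ρ3
  set a1 := upd3 a x y z (a x + (ρ2 * b z - ρ3 * b y)) (a y + (ρ3 * b x - ρ1 * b z))
      (a z + (ρ1 * b y - ρ2 * b x)) with ha1
  have r2 := (cross2 b a1 x y z hxy hxz hyz (-h1) (-h2) (-h3)).swap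
  set b1 := upd3 b x y z (b x + (-h2 * a1 z - -h3 * a1 y)) (b y + (-h3 * a1 x - -h1 * a1 z))
      (b z + (-h1 * a1 y - -h2 * a1 x)) with hb1
  have r3 := cross2 a1 b1 x y z hxy hxz hyz (-ρ1) (-ρ2) (-ρ3)
  set a2 := upd3 a1 x y z (a1 x + (-ρ2 * b1 z - -ρ3 * b1 y)) (a1 y + (-ρ3 * b1 x - -ρ1 * b1 z))
      (a1 z + (-ρ1 * b1 y - -ρ2 * b1 x)) with ha2
  have r4 := (cross2 b1 a2 x y z hxy hxz hyz h1 h2 h3).swap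
  have e1x : a1 x = a x + (ρ2 * b z - ρ3 * b y) := by simp [ha1, upd3]
  have e1y : a1 y = a y + (ρ3 * b x - ρ1 * b z) := by simp [ha1, upd3, hyx]
  have e1z : a1 z = a z + (ρ1 * b y - ρ2 * b x) := by simp [ha1, upd3, hzx, hzy]
  have f1x : b1 x = b x + (-h2 * a1 z - -h3 * a1 y) := by simp [hb1, upd3]
  have f1y : b1 y = b y + (-h3 * a1 x - -h1 * a1 z) := by simp [hb1, upd3, hyx]
  have f1z : b1 z = b z + (-h1 * a1 y - -h2 * a1 x) := by simp [hb1, upd3, hzx, hzy]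
  have e2x : a2 x = a x + h1 * (ρ1 * a x + ρ2 * a y + ρ3 * a z) := by
    have : a2 x = a1 x + (-ρ2 * b1 z - -ρ3 * b1 y) := by simp [ha2, upd3]
    rw [this, f1z, f1y, e1x, e1y, e1z]
    linear_combination (-(a x + (ρ2 * b z - ρ3 * b y))) * hρ
  have e2y : a2 y = a y + h2 * (ρ1 * a x + ρ2 * a y + ρ3 * a z) := by
    have : a2 y = a1 y + (-ρ3 * b1 x - -ρ1 * b1 z) := by simp [ha2, upd3, hyx]
    rw [this, f1z, f1x, e1x, e1y, e1z]
    linear_combination (-(a y + (ρ3 * b x - ρ1 * b z))) * hρ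
  have e2z : a2 z = a z + h3 * (ρ1 * a x + ρ2 * a y + ρ3 * a z) := by
    have : a2 z = a1 z + (-ρ1 * b1 y - -ρ2 * b1 x) := by simp [ha2, upd3, hzx, hzy]
    rw [this, f1x, f1y, e1x, e1y, e1z]
    linear_combination (-(a z + (ρ1 * b y - ρ2 * b x))) * hρ
  convert ((r1.trans r2).trans r3).trans r4 using 1
  · funext k
    by_cases hx : k = x
    · subst hx; rw [e2x]; simp [upd3]
    by_cases hy : k = y
    · subst hy; rw [e2y]; simp [upd3, hx]
    by_cases hz : k = z
    · subst hz; rw [e2z]; simp [upd3, hx, hy]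
    simp [ha2, ha1, upd3, hx, hy, hz]
  · funext k
    by_cases hx : k = x
    · subst hx
      simp only [upd3, if_true]
      rw [f1x, e1y, e1z, e2y, e2z]
      linear_combination (-b k) * hρ
    by_cases hy : k = y
    · subst hy
      simp only [upd3, if_true, if_neg hyx]
      rw [f1y, e1x, e1z, e2x, e2z]
      linear_combination (-b k) * hρ
    by_cases hz : k = z
    · subst hz
      simp only [upd3, if_true, if_neg hzx, if_neg hzy]
      rw [f1z, e1x, e1y, e2x, e2y]
      linear_combination (-b k) * hρ
    simp [hb1, upd3, hx, hy, hz]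

theorem core_iter (a1 b1 a' b' : ι → R) (x y : ι) (hxy : x ≠ y) (β p' q' : R) (K : ℕ)
    (hβ' : p' * a' x + q' * a' y = β) (hx : a1 x = a' x) (hy : a1 y = a' y)
    (s t : ι → R) (hs : ∀ k, a' k = a1 k + β ^ (K + 2) * s k)
    (ht : ∀ k, b' k = b1 k + β ^ (K + 2) * t k) (S : Finset ι) (hxS : x ∉ S) (hyS : y ∉ S) :
    ∃ a2 b2 : ι → R, Reach (4 * S.card) a1 b1 a2 b2 ∧ a2 x = a' x ∧ a2 y = a' y ∧
      (∀ k ∈ S, a2 k = a' k ∧ b2 k = b' k) ∧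
      (∀ k, k ∉ S → k ≠ x → k ≠ y → a2 k = a1 k ∧ b2 k = b1 k) ∧
      (∃ f, b' x = b2 x + β ^ (K + 1) * f) ∧ (∃ f, b' y = b2 y + β ^ (K + 1) * f) := by
  induction S using Finset.induction_on with
  | empty =>
    refine ⟨a1, b1, Reach.refl _ _ _, hx, hy, by simp, by simp, ⟨β * t x, ?_⟩, ⟨β * t y, ?_⟩⟩
    · rw [ht x]; ring
    · rw [ht y]; ring
  | insert k S hk ih =>
    have hxk : x ≠ k := fun h => hxS (by simp [h])
    have hyk : y ≠ k := fun h => hyS (by simp [h])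
    obtain ⟨a2, b2, r2, ex, ey, hS, hn, ⟨f, hf⟩, ⟨g, hg⟩⟩ :=
      ih (fun h => hxS (Finset.mem_insert_of_mem h)) (fun h => hyS (Finset.mem_insert_of_mem h))
    obtain ⟨ek, gk⟩ := hn k hk hxk.symm hyk.symm
    set A1 := β ^ (K + 1) * s k * p' with hA1
    set A2 := β ^ (K + 1) * s k * q' with hA2
    set B1 := β ^ (K + 1) * t k * p' with hB1
    set B2 := β ^ (K + 1) * t k * q' with hB2
    have hyx := hxy.symm
    have hkx := hxk.symm
    have hky := hyk.symm
    let a3 := Function.update a2 k (a2 k + A1 * a2 x)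
    let b3 := Function.update b2 x (b2 x - A1 * b2 k)
    let a4 := Function.update a2 k (a' k)
    let b4 := upd3 b2 x y k (b2 x - A1 * b2 k) (b2 y - A2 * b2 k) (b2 k)
    let b5 := upd3 b2 x y k (b2 x - A1 * b2 k - B1 * a' k) (b2 y - A2 * b2 k) (b2 k + B1 * a2 x)
    let b6 := upd3 b2 x y k (b2 x - A1 * b2 k - B1 * a' k) (b2 y - A2 * b2 k - B2 * a' k) (b' k)
    have r3 : Reach 1 a2 b2 a3 b3 := by
      refine Reach.s1 k x A1 hkx ?_ ?_ ?_ ?_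
      · simp [a3]
      · intro j hj; simp [a3, hj]
      · simp [b3]
      · intro j hj; simp [b3, hj]
    have r4 : Reach 1 a3 b3 a4 b4 := by
      refine Reach.s1 k y A2 hky ?_ ?_ ?_ ?_
      · simp [a3, a4, hyk]
        rw [hs k, ek, ex, ey, hA1, hA2, ← hβ']; ring
      · intro j hj; simp [a3, a4, hj]
      · simp [b3, b4, upd3, hyx, hkx]
      · intro j hj
        simp only [b3, b4, upd3, hj, if_false, Function.update_apply]
        split_ifs with h1 h2
        · rfl
        · rw [h2]
        · rfl
    have r5 : Reach 1 a4 b4 a4 b5 := by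
      refine Reach.s3 k x B1 hkx ?_ ?_ ?_ rfl
      · simp [a4, b4, b5, upd3, hkx, hky, hxk]
      · simp [a4, b4, b5, upd3]
      · intro j h1 h2
        simp [b4, b5, upd3, h1, h2]
    have r6 : Reach 1 a4 b5 a4 b6 := by
      refine Reach.s3 k y B2 hky ?_ ?_ ?_ rfl
      · simp [a4, b5, b6, upd3, hkx, hky, hyk]
        rw [ht k, gk, ex, ey, hB1, hB2, ← hβ']; ring
      · simp [a4, b5, b6, upd3, hyx]
      · intro j h1 h2
        simp [b5, b6, upd3, h1, h2]
    refine ⟨a4, b6, ((((r2.trans r3).trans r4).trans r5).trans r6).mono ?_, ?_, ?_, ?_, ?_, ?_, ?_⟩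
    · rw [Finset.card_insert_of_notMem hk]; omega
    · simp [a4, hxk, ex]
    · simp [a4, hyk, ey]
    · intro j hj
      rcases Finset.mem_insert.1 hj with h | h
      · subst h; simp [a4, b6, upd3, hkx, hky]
      · have h1 : j ≠ k := by rintro rfl; exact hk h
        have h2 : j ≠ x := by rintro rfl; exact hxS hj
        have h3 : j ≠ y := by rintro rfl; exact hyS hj
        simpa [a4, b6, upd3, h1, h2, h3] using hS j h
    · intro j hj h2 h3
      have h1 : j ≠ k := by rintro rfl; exact hj (Finset.mem_insert_self _ _)
      have h4 : j ∉ S := fun h => hj (Finset.mem_insert_of_mem h)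
      simpa [a4, b6, upd3, h1, h2, h3] using hn j h4 h2 h3
    · refine ⟨f + s k * p' * b2 k + t k * p' * a' k, ?_⟩
      have : b6 x = b2 x - A1 * b2 k - B1 * a' k := by simp [b6, upd3]
      rw [this, hf, hA1, hB1]; ring
    · refine ⟨g + s k * q' * b2 k + t k * q' * a' k, ?_⟩
      have : b6 y = b2 y - A2 * b2 k - B2 * a' k := by simp [b6, upd3, hyx]
      rw [this, hg, hA2, hB2]; ring

theorem core_lemma [Fintype ι] (a b a' b' : ι → R) (x y z : ι) (hxy : x ≠ y) (hxz : x ≠ z)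
    (hyz : y ≠ z) (β p q p' q' : R) (K : ℕ)
    (hβ : p * a x + q * a y = β) (hβ' : p' * a' x + q' * a' y = β)
    (hann : ∀ c, β ^ (K + 1) * c = 0 → β ^ K * c = 0)
    (u w : ι → R) (hu : ∀ k, a' k = a k + β ^ (K + 4) * u k)
    (hw : ∀ k, b' k = b k + β ^ (K + 4) * w k)
    (hq : ∑ i, a i * b i = 0) (hq' : ∑ i, a' i * b' i = 0) :
    Reach (4 * Fintype.card ι + 5) a b a' b' := by
  have hyx := hxy.symm
  have hzx := hxz.symm
  have hzy := hyz.symm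
  set ω1 := β ^ (K + 2) * u x with hω1
  set ω2 := β ^ (K + 2) * u y with hω2
  set μ := p * ω1 + q * ω2 with hμ
  have r1 := comm_step a b x y z hxy hxz hyz (β * ω1) (β * ω2) (-((1 - a z) * μ))
    ((1 - a z) * p) ((1 - a z) * q) β (by rw [hμ]; ring)
  have hρc : (1 - a z) * p * a x + (1 - a z) * q * a y + β * a z = β := by
    linear_combination (1 - a z) * hβ
  rw [hρc] at r1
  set a1 := upd3 a x y z (a x + β * ω1 * β) (a y + β * ω2 * β) (a z + -((1 - a z) * μ) * β) with ha1
  set H := β * u x * b x + β * u y * b y - (1 - a z) * (p * u x + q * u y) * b z with hH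
  have hhd : β * ω1 * b x + β * ω2 * b y + -((1 - a z) * μ) * b z = β ^ (K + 2) * H := by
    rw [hH, hμ, hω1, hω2]; ring
  rw [hhd] at r1
  set b1 := upd3 b x y z (b x - (1 - a z) * p * (β ^ (K + 2) * H))
    (b y - (1 - a z) * q * (β ^ (K + 2) * H)) (b z - β * (β ^ (K + 2) * H)) with hb1
  have ex : a1 x = a' x := by
    rw [hu x]; simp only [ha1, upd3, if_true]; rw [hω1]; ring
  have ey : a1 y = a' y := by
    rw [hu y]; simp only [ha1, upd3, if_true, if_neg hyx]; rw [hω2]; ring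
  have hs : ∀ k, ∃ s, a' k = a1 k + β ^ (K + 2) * s := by
    intro k
    by_cases hx : k = x
    · exact ⟨0, by rw [hx, ex]; ring⟩
    by_cases hy : k = y
    · exact ⟨0, by rw [hy, ey]; ring⟩
    by_cases hz : k = z
    · refine ⟨β ^ 2 * u z + (1 - a z) * (p * u x + q * u y) * β, ?_⟩
      subst hz
      have : a1 k = a k + -((1 - a k) * μ) * β := by simp [ha1, upd3, hx, hy]
      rw [hu k, this, hμ, hω1, hω2]; ring
    · refine ⟨β ^ 2 * u k, ?_⟩
      have : a1 k = a k := by simp [ha1, upd3, hx, hy, hz]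
      rw [hu k, this]; ring
  have ht : ∀ k, ∃ s, b' k = b1 k + β ^ (K + 2) * s := by
    intro k
    by_cases hx : k = x
    · refine ⟨β ^ 2 * w x + (1 - a z) * p * H, ?_⟩
      have : b1 x = b x - (1 - a z) * p * (β ^ (K + 2) * H) := by simp [hb1, upd3]
      rw [hx, hw x, this]; ring
    by_cases hy : k = y
    · refine ⟨β ^ 2 * w y + (1 - a z) * q * H, ?_⟩
      have : b1 y = b y - (1 - a z) * q * (β ^ (K + 2) * H) := by simp [hb1, upd3, hyx]
      rw [hy, hw y, this]; ring
    by_cases hz : k = z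
    · refine ⟨β ^ 2 * w z + β * H, ?_⟩
      have : b1 z = b z - β * (β ^ (K + 2) * H) := by simp [hb1, upd3, hzx, hzy]
      rw [hz, hw z, this]; ring
    · refine ⟨β ^ 2 * w k, ?_⟩
      have : b1 k = b k := by simp [hb1, upd3, hx, hy, hz]
      rw [hw k, this]; ring
  choose s hs using hs
  choose t ht using ht
  obtain ⟨a2, b2, r2, e2x, e2y, hS, -, ⟨f, hf⟩, ⟨g, hg⟩⟩ :=
    core_iter a1 b1 a' b' x y hxy β p' q' K hβ' ex ey s t hs ht
      ((Finset.univ.erase x).erase y) (by simp) (by simp)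
  have ea : a2 = a' := by
    funext k
    by_cases hx : k = x
    · rw [hx, e2x]
    by_cases hy : k = y
    · rw [hy, e2y]
    exact (hS k (by simp [hx, hy])).1
  have eb : ∀ k, k ≠ x → k ≠ y → b2 k = b' k := fun k hx hy => (hS k (by simp [hx, hy])).2
  subst ea
  have hq2 : ∑ i, a2 i * b2 i = 0 := by rw [(r1.trans r2).quad, hq]
  have hd : a2 x * (β ^ (K + 1) * f) + a2 y * (β ^ (K + 1) * g) = 0 := by
    have h := sum_update_aux (fun i => a2 i * (b' i - b2 i)) (fun i => if i = x then
      a2 x * (b' x - b2 x) + a2 y * (b' y - b2 y) else 0) x y hxy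
      (fun k hx hy => by simp [eb k hx hy, hx]) (by simp [hyx])
    rw [Finset.sum_ite_eq' Finset.univ x] at h
    simp only [mul_sub, Finset.sum_sub_distrib, hq', hq2, Finset.mem_univ, if_true] at h
    rw [hf, hg] at h
    linear_combination -h
  have hd' : β ^ K * (a2 x * f + a2 y * g) = 0 := by
    apply hann
    linear_combination hd
  have r3 : Reach 1 a2 b2 a2 b' := by
    refine Reach.s3 x y (β ^ K * (q' * f - p' * g)) hxy ?_ ?_ (fun k hx hy => (eb k hx hy).symm) rfl
    · rw [hf]
      linear_combination (-β ^ K * f) * hβ' + p' * hd'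
    · rw [hg]
      linear_combination (-β ^ K * g) * hβ' + q' * hd'
  refine ((r1.trans r2).trans r3).mono ?_
  rw [Finset.card_erase_of_mem (by simp [hyx]), Finset.card_erase_of_mem (by simp), Finset.card_univ]
  have : ({x, y, z} : Finset ι).card ≤ Fintype.card ι := Finset.card_le_univ _
  rw [Finset.card_eq_three.2 ⟨x, y, z, hxy, hxz, hyz, rfl⟩] at this
  omega

end CoreLem

section LocLem
open Polynomial

theorem over_eq {A : Type*} [CommRing A] (f : A[X]) (hf : f.Monic) (Q Q' : Ideal A[X])
    [hQ : Q.IsPrime] (hfQ : f ∈ Q) (hle : Q ≤ Q') (hc : Q'.comap C ≤ Q.comap C) : Q = Q' := by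
  by_contra hne
  obtain ⟨r, hr1, hr2⟩ := SetLike.exists_of_lt (lt_of_le_of_ne hle hne)
  have hinteg := hf.quotient_isIntegral (Ideal.mem_span_singleton_self f) (Ideal.Quotient.mk _ r)
  obtain ⟨g, hg, hg0⟩ := hinteg
  have hg1 : Ideal.Quotient.mk (Ideal.span {f}) (g.eval₂ C r) = 0 := by
    rw [← hg0, Polynomial.hom_eval₂]; rfl
  have hg2 : g.eval₂ C r ∈ Q :=
    (Ideal.span_singleton_le_iff_mem _ |>.2 hfQ) (Ideal.Quotient.eq_zero_iff_mem.1 hg1)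
  have := Ideal.comap_lt_comap_of_root_mem_sdiff (f := (C : A →+* A[X])) hle ⟨hr1, hr2⟩ (p := g)
    (by
      have : Nontrivial (A ⧸ Q.comap C) :=
        Ideal.Quotient.nontrivial_iff.2 (Ideal.IsPrime.ne_top inferInstance)
      exact (hg.map _).ne_zero) hg2
  exact absurd hc (not_le_of_gt this)

theorem over_inc {A : Type*} [CommRing A] (f : A[X]) (hf : f.Monic) (T : Set (Ideal A))
    (hinc : ∀ p ∈ T, ∀ q ∈ T, p ≤ q → p = q) :
    ∀ P ∈ {Q : Ideal A[X] | Q.IsPrime ∧ f ∈ Q ∧ Q.comap C ∈ T},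
      ∀ Q ∈ {Q : Ideal A[X] | Q.IsPrime ∧ f ∈ Q ∧ Q.comap C ∈ T}, P ≤ Q → P = Q := by
  rintro P ⟨h1, h2, h3⟩ Q ⟨h4, h5, h6⟩ hle
  exact over_eq f hf P Q h2 hle (hinc _ h3 _ h6 (Ideal.comap_mono hle)).ge

theorem over_fin {A : Type*} [CommRing A] [IsNoetherianRing A] (f : A[X]) (hf : f.Monic)
    (T : Set (Ideal A)) (hT : T.Finite) :
    {Q : Ideal A[X] | Q.IsPrime ∧ f ∈ Q ∧ Q.comap C ∈ T}.Finite := by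
  refine (hT.biUnion (t := fun p => (p.map C ⊔ Ideal.span {f}).minimalPrimes)
    (fun p _ => Ideal.finite_minimalPrimes_of_isNoetherianRing _ _)).subset ?_
  rintro Q ⟨h1, h2, h3⟩
  simp only [Set.mem_iUnion]
  refine ⟨Q.comap C, h3, ⟨h1, sup_le Ideal.map_comap_le ?_⟩, ?_⟩
  · rwa [Ideal.span_singleton_le_iff_mem]
  · rintro Q' ⟨h4, h5⟩ hle
    have hfQ' : f ∈ Q' := h5 (Ideal.mem_sup_right (Ideal.mem_span_singleton_self f))
    have : Q' = Q := over_eq f hf Q' Q hfQ' hle (by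
      rw [← Ideal.map_le_iff_le_comap]; exact le_sup_left.trans h5)
    exact this.ge

theorem exists_beta {A : Type*} [CommRing A] (f g : A[X]) (hf : f.Monic)
    (T : Set (Ideal A)) (hT : T.Finite) (hp : ∀ p ∈ T, p.IsPrime)
    (h : ∀ Q : Ideal A[X], Q.IsPrime → Q.comap C ∈ T → f ∈ Q → g ∈ Q → False) :
    ∃ β : A, (∀ p ∈ T, β ∉ p) ∧ ∃ P Q : A[X], P * f + Q * g = C β := by
  let K : Ideal A[X] := Ideal.span {f, g}
  have hfK : f ∈ K := Ideal.subset_span (by simp)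
  have hgK : g ∈ K := Ideal.subset_span (by simp)
  have key : ∀ p ∈ T, ¬ K.comap C ≤ p := by
    intro p hpT hle
    have := hp p hpT
    have hinteg : Algebra.IsIntegral A (A[X] ⧸ Ideal.span {f}) :=
      ⟨fun z => hf.quotient_isIntegral (Ideal.mem_span_singleton_self f) z⟩
    have hK : (K.map (Ideal.Quotient.mk (Ideal.span {f}))).comap
        (Ideal.Quotient.mk (Ideal.span {f})) = K := by
      rw [Ideal.comap_map_of_surjective _ Ideal.Quotient.mk_surjective, sup_eq_left]
      rw [← RingHom.ker_eq_comap_bot, Ideal.mk_ker, Ideal.span_singleton_le_iff_mem]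
      exact hfK
    obtain ⟨Q, hQ1, hQ2, hQ3⟩ := Ideal.exists_ideal_over_prime_of_isIntegral p
      (K.map (Ideal.Quotient.mk (Ideal.span {f}))) (by
        refine le_trans ?_ hle
        intro x hx
        change C x ∈ K
        rw [← hK]; exact hx)
    have hKQ : K ≤ Q.comap (Ideal.Quotient.mk (Ideal.span {f})) := by
      rw [← hK]; exact Ideal.comap_mono hQ1
    refine h (Q.comap (Ideal.Quotient.mk (Ideal.span {f}))) inferInstance ?_ (hKQ hfK) (hKQ hgK)
    rw [Ideal.comap_comap]
    have : Q.comap ((Ideal.Quotient.mk (Ideal.span {f})).comp C) = p := hQ3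
    rwa [this]
  have h2 : ¬ ((K.comap C : Ideal A) : Set A) ⊆ ⋃ p ∈ T, (p : Set A) := by
    intro hs
    have := ((K.comap C).subset_union_prime_finite hT (f := id) ⊥ ⊥ (fun p h _ _ => hp p h)).1 hs
    obtain ⟨p, hpT, hle⟩ := this
    exact key p hpT hle
  rw [Set.not_subset] at h2
  obtain ⟨β, h3, h4⟩ := h2
  simp only [Set.mem_iUnion, not_exists] at h4
  refine ⟨β, fun p hp' hb => h4 p hp' hb, ?_⟩
  exact Ideal.mem_span_pair.1 h3

variable {ι : Type*} [DecidableEq ι]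

theorem stage2 {R : Type*} [CommRing R] (F : Set (Ideal R)) (hF : F.Finite)
    (hp : ∀ Q ∈ F, Q.IsPrime) (hinc : ∀ P ∈ F, ∀ Q ∈ F, P ≤ Q → P = Q)
    (a b : ι → R) (x y : ι) (hxy : x ≠ y)
    (h0 : ∀ Q ∈ F, (∃ i, i ≠ x ∧ a i ∉ Q) ∨ ∃ i, i ≠ x ∧ b i ∉ Q)
    (S : Finset ι) (hxS : x ∉ S) (hyS : y ∉ S) :
    ∃ a' : ι → R, Reach S.card a b a' b ∧ a' x = a x ∧
      ∀ Q ∈ F, (∃ i, i ≠ x ∧ a' i ∉ Q) ∨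
        ∃ i, i ≠ x ∧ b i ∉ Q ∧ i ∉ S ∧ (S.Nonempty → i ≠ y) := by
  induction S using Finset.induction_on with
  | empty =>
    refine ⟨a, Reach.refl _ _ _, rfl, fun Q hQ => ?_⟩
    simpa using h0 Q hQ
  | insert j S hj ih =>
    have hxj : x ≠ j := fun h => hxS (by simp [h])
    have hyj : y ≠ j := fun h => hyS (by simp [h])
    obtain ⟨a1, r1, e1, h1⟩ :=
      ih (fun h => hxS (Finset.mem_insert_of_mem h)) (fun h => hyS (Finset.mem_insert_of_mem h))
    obtain ⟨ξ, hξ⟩ := sel_lemma F hF hp hinc (fun Q => ∀ i, i ≠ x → a1 i ∈ Q)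
    let a2 := Function.update (Function.update a1 y (a1 y + ξ * b j)) j (a1 j - ξ * b y)
    have r2 : Reach 1 a1 b a2 b := Reach.one (Stp.s2 a1 b y j ξ hyj)
    refine ⟨a2, ?_, ?_, ?_⟩
    · rw [Finset.card_insert_of_notMem hj]; exact r1.trans r2
    · simp [a2, hxy, hxj, e1]
    · intro Q hQ
      have hQp := hp Q hQ
      by_cases hall : ∀ i, i ≠ x → a1 i ∈ Q
      · have hx1 := (hξ Q hQ).1 hall
        rcases h1 Q hQ with ⟨i, hi, hai⟩ | ⟨i, hi, hbi, hiS, hiy⟩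
        · exact absurd (hall i hi) hai
        · by_cases hij : i = j
          · left
            refine ⟨y, hxy.symm, ?_⟩
            have : a2 y = a1 y + ξ * b j := by simp [a2, hyj]
            rw [this, Ideal.add_mem_iff_right Q (hall y hxy.symm)]
            intro hm
            rcases hQp.mem_or_mem hm with h | h
            · exact hx1 h
            · exact hbi (hij ▸ h)
          · by_cases hiy' : i = y
            · left
              refine ⟨j, hxj.symm, ?_⟩
              have : a2 j = a1 j - ξ * b y := by simp [a2]
              rw [this]
              intro hm
              have hm' : ξ * b y ∈ Q := by
                have := Q.sub_mem (hall j hxj.symm) hm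
                simpa using this
              rcases hQp.mem_or_mem hm' with h | h
              · exact hx1 h
              · exact hbi (hiy' ▸ h)
            · right
              exact ⟨i, hi, hbi, by simp [hij, hiS], fun _ => hiy'⟩
      · have hx1 := (hξ Q hQ).2 hall
        left
        by_contra hcon
        apply hall
        push Not at hcon
        intro i hi
        have h2 := hcon i hi
        by_cases hij : i = j
        · subst hij
          have : a2 i = a1 i - ξ * b y := by simp [a2]
          rw [this] at h2
          have := Q.add_mem h2 (Q.mul_mem_right (b y) hx1)
          simpa using this
        · by_cases hiy : i = y
          · subst hiy
            have : a2 i = a1 i + ξ * b j := by simp [a2, hij]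
            rw [this] at h2
            exact (Ideal.add_mem_iff_left Q (Q.mul_mem_right _ hx1)).1 h2
          · simpa [a2, hij, hiy] using h2

theorem stage3 {R : Type*} [CommRing R] (F : Set (Ideal R)) (hF : F.Finite)
    (hp : ∀ Q ∈ F, Q.IsPrime) (hinc : ∀ P ∈ F, ∀ Q ∈ F, P ≤ Q → P = Q)
    (a b : ι → R) (x y : ι) (hxy : x ≠ y)
    (h0 : ∀ Q ∈ F, (∃ i, i ≠ x ∧ a i ∉ Q))
    (S : Finset ι) (hxS : x ∉ S) (hyS : y ∉ S) :
    ∃ a' b' : ι → R, Reach S.card a b a' b' ∧ (∀ i, i ≠ y → a' i = a i) ∧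
      ∀ Q ∈ F, a' y ∉ Q ∨ ∃ i, i ≠ x ∧ i ≠ y ∧ a i ∉ Q ∧ i ∉ S := by
  induction S using Finset.induction_on with
  | empty =>
    refine ⟨a, b, Reach.refl _ _ _, fun _ _ => rfl, fun Q hQ => ?_⟩
    obtain ⟨i, hi, hai⟩ := h0 Q hQ
    by_cases hiy : i = y
    · left; rwa [← hiy]
    · right; exact ⟨i, hi, hiy, hai, by simp⟩
  | insert j S hj ih =>
    have hxj : x ≠ j := fun h => hxS (by simp [h])
    have hyj : y ≠ j := fun h => hyS (by simp [h])
    obtain ⟨a1, b1, r1, e1, h1⟩ :=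
      ih (fun h => hxS (Finset.mem_insert_of_mem h)) (fun h => hyS (Finset.mem_insert_of_mem h))
    obtain ⟨ξ, hξ⟩ := sel_lemma F hF hp hinc (fun Q => a1 y ∈ Q)
    refine ⟨Function.update a1 y (a1 y + ξ * a1 j), Function.update b1 j (b1 j - ξ * b1 y),
      ?_, ?_, ?_⟩
    · rw [Finset.card_insert_of_notMem hj]; exact r1.trans (Reach.one (Stp.s1 a1 b1 y j ξ hyj))
    · intro i hi; simp [hi, e1 i hi]
    · intro Q hQ
      have hQp := hp Q hQ
      rw [Function.update_self]
      by_cases hy : a1 y ∈ Q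
      · have hx1 := (hξ Q hQ).1 hy
        rcases h1 Q hQ with h | ⟨i, hi, hiy, hai, hiS⟩
        · exact absurd hy h
        · by_cases hij : i = j
          · left
            rw [Ideal.add_mem_iff_right Q hy]
            intro hm
            rcases hQp.mem_or_mem hm with h | h
            · exact hx1 h
            · rw [e1 j hyj.symm] at h; exact hai (hij ▸ h)
          · right
            exact ⟨i, hi, hiy, hai, by simp [hij, hiS]⟩
      · left
        rwa [Ideal.add_mem_iff_left Q (Q.mul_mem_right _ ((hξ Q hQ).2 hy))]

theorem monic_shift {A : Type*} [CommRing A] (f g : A[X]) (hf : f.Monic) :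
    ∃ N : ℕ, (g + X ^ N * f).Monic := by
  refine ⟨g.natDegree + 1, ?_⟩
  rcases subsingleton_or_nontrivial A with h | h
  · exact Subsingleton.elim _ _
  have hm : (X ^ (g.natDegree + 1) * f).Monic := (monic_X_pow _).mul hf
  refine hm.add_of_right ?_
  refine degree_le_natDegree.trans_lt ?_
  rw [degree_eq_natDegree hm.ne_zero, (monic_X_pow _).natDegree_mul hf, natDegree_X_pow]
  exact_mod_cast (by omega)

variable [Fintype ι]

theorem local_lemma {A : Type*} [CommRing A] [IsNoetherianRing A] (a b : ι → A[X])
    (hu : UniP a b) (x y z : ι) (hxy : x ≠ y) (hxz : x ≠ z) (hyz : y ≠ z)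
    (hax : (a x).Monic) (hay : (a y).Monic)
    (T : Set (Ideal A)) (hT : T.Finite) (hp : ∀ p ∈ T, p.IsPrime)
    (hinc : ∀ p ∈ T, ∀ q ∈ T, p ≤ q → p = q) :
    ∃ a' b' : ι → A[X], Reach (2 * Fintype.card ι - 3) a b a' b' ∧
      ∃ β : A, (∀ p ∈ T, β ∉ p) ∧ ∃ P Q : A[X], P * a' x + Q * a' y = C β := by
  obtain ⟨ξ, hξ⟩ := sel_lemma _ (over_fin (a x) hax T hT) (fun Q hQ => hQ.1)
    (over_inc (a x) hax T hinc) (fun Q => b y ∈ Q)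
  obtain ⟨N, hN⟩ := monic_shift (a x * a y) (a x + ξ * a y) (hax.mul hay)
  have r1 := Reach.one (Stp.s1 a b x y (ξ + X ^ N * a x) hxy)
  set a1 := Function.update a x (a x + (ξ + X ^ N * a x) * a y) with ha1
  set b1 := Function.update b y (b y - (ξ + X ^ N * a x) * b x) with hb1
  have hm : (a1 x).Monic := by
    have : a1 x = a x + ξ * a y + X ^ N * (a x * a y) := by simp [ha1]; ring
    rw [this]; exact hN
  have hF := over_fin (a1 x) hm T hT
  have hFi := over_inc (a1 x) hm T hinc
  have h1 : ∀ Q ∈ {Q : Ideal A[X] | Q.IsPrime ∧ a1 x ∈ Q ∧ Q.comap C ∈ T},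
      (∃ i, i ≠ x ∧ a1 i ∉ Q) ∨ ∃ i, i ≠ x ∧ b1 i ∉ Q := by
    rintro Q ⟨hQ, hQx, hQT⟩
    by_contra hcon
    push Not at hcon
    obtain ⟨hA, hB⟩ := hcon
    have e1 : ∀ i, i ≠ x → a i ∈ Q := fun i hi => by simpa [ha1, hi] using hA i hi
    have e2 : a x ∈ Q := by
      have : a1 x = a x + (ξ + X ^ N * a x) * a y := by simp [ha1]
      rw [this, Ideal.add_mem_iff_left Q (Q.mul_mem_left _ (e1 y hxy.symm))] at hQx
      exact hQx
    have e3 : b y - ξ * b x ∈ Q := by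
      have h := hB y hxy.symm
      have : b1 y = (b y - ξ * b x) - X ^ N * b x * a x := by simp [hb1]; ring
      rw [this] at h
      have := Q.add_mem h (Q.mul_mem_left (X ^ N * b x) e2)
      simpa using this
    have e4 := hξ Q ⟨hQ, e2, hQT⟩
    have e5 : b y ∈ Q := by
      by_contra hb
      have := Q.add_mem e3 (Q.mul_mem_right (b x) (e4.2 hb))
      exact hb (by simpa using this)
    have e6 : b x ∈ Q := by
      have : ξ * b x ∈ Q := by
        have := Q.sub_mem e5 e3
        simpa using this
      exact (hQ.mem_or_mem this).resolve_left (e4.1 e5)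
    refine hu Q hQ (fun i => ?_) (fun i => ?_)
    · by_cases hi : i = x
      · rwa [hi]
      · exact e1 i hi
    · by_cases hi : i = x
      · rwa [hi]
      · by_cases hi' : i = y
        · rwa [hi']
        · simpa [hb1, hi'] using hB i hi
  have hzS : z ∈ (Finset.univ.erase x).erase y := by simp [hxz.symm, hyz.symm]
  obtain ⟨a2, r2, e2, h2⟩ := stage2 _ hF (fun Q hQ => hQ.1) hFi a1 b1 x y hxy h1
    ((Finset.univ.erase x).erase y) (by simp) (by simp)
  have h2' : ∀ Q ∈ {Q : Ideal A[X] | Q.IsPrime ∧ a1 x ∈ Q ∧ Q.comap C ∈ T},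
      (∃ i, i ≠ x ∧ a2 i ∉ Q) := by
    intro Q hQ
    rcases h2 Q hQ with h | ⟨i, hi, -, hiS, hiy⟩
    · exact h
    · exact absurd (by simp [hi, hiy ⟨z, hzS⟩]) hiS
  obtain ⟨a3, b3, r3, e3, h3⟩ := stage3 _ hF (fun Q hQ => hQ.1) hFi a2 b1 x y hxy h2'
    ((Finset.univ.erase x).erase y) (by simp) (by simp)
  have hx3 : a3 x = a1 x := by rw [e3 x hxy, e2]
  have h3' : ∀ Q ∈ {Q : Ideal A[X] | Q.IsPrime ∧ a1 x ∈ Q ∧ Q.comap C ∈ T}, a3 y ∉ Q := by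
    intro Q hQ
    rcases h3 Q hQ with h | ⟨i, hi, hiy, -, hiS⟩
    · exact h
    · exact absurd (by simp [hi, hiy]) hiS
  refine ⟨a3, b3, ((r1.trans r2).trans r3).mono ?_, ?_⟩
  · have hc : ((Finset.univ.erase x).erase y).card = Fintype.card ι - 1 - 1 := by
      rw [Finset.card_erase_of_mem (by simp [hxy.symm]), Finset.card_erase_of_mem (by simp),
        Finset.card_univ]
    rw [hc]
    have : 0 < ((Finset.univ.erase x).erase y).card := Finset.card_pos.2 ⟨z, hzS⟩
    omega
  · rw [hx3]
    exact exists_beta (a1 x) (a3 y) hm T hT hp (fun Q hQ hQT h4 h5 => h3' Q ⟨hQ, h4, hQT⟩ h5)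

end LocLem

section MoveLem
open Polynomial
variable {ι : Type*} [DecidableEq ι] [Fintype ι]

theorem ann_stab {A : Type*} [CommRing A] [IsNoetherianRing A] (β : A) :
    ∃ K : ℕ, ∀ c, β ^ (K + 1) * c = 0 → β ^ K * c = 0 := by
  let f : ℕ →o Submodule A A :=
    ⟨fun k => LinearMap.ker (LinearMap.mulLeft A (β ^ k)), by
      intro k l hkl c hc
      simp only [LinearMap.mem_ker, LinearMap.mulLeft_apply] at hc ⊢
      obtain ⟨m, rfl⟩ := Nat.exists_eq_add_of_le hkl
      rw [pow_add, mul_right_comm, hc, zero_mul]⟩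
  obtain ⟨K, hK⟩ := monotone_stabilizes_iff_noetherian.2 (inferInstance : IsNoetherian A A) f
  refine ⟨K, fun c hc => ?_⟩
  have h1 : c ∈ f (K + 1) := by
    change c ∈ LinearMap.ker (LinearMap.mulLeft A (β ^ (K + 1)))
    rw [LinearMap.mem_ker, LinearMap.mulLeft_apply]
    exact hc
  rw [← hK (K + 1) (by omega)] at h1
  change c ∈ LinearMap.ker (LinearMap.mulLeft A (β ^ K)) at h1
  rwa [LinearMap.mem_ker, LinearMap.mulLeft_apply] at h1

theorem move_lemma {A : Type*} [CommRing A] [IsNoetherianRing A] (a b a' b' : ι → A[X]) (m : ℕ)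
    (x y z : ι) (hxy : x ≠ y) (hxz : x ≠ z) (hyz : y ≠ z)
    (hq : ∑ i, a i * b i = 0) (hr : Reach m a b a' b') (β : A) (P Q : A[X])
    (hβ : P * a' x + Q * a' y = C β) :
    ∃ L : ℕ, ∀ τ τ' : A, β ^ L ∣ τ' - τ →
      Reach (2 * m + (4 * Fintype.card ι + 5)) (fun i => (a i).eval τ) (fun i => (b i).eval τ)
        (fun i => (a i).eval τ') (fun i => (b i).eval τ') := by
  obtain ⟨K, hK⟩ := ann_stab β
  refine ⟨K + 4, fun τ τ' hd => ?_⟩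
  have hq' : ∑ i, a' i * b' i = 0 := by rw [hr.quad, hq]
  have r1 := hr.map (evalRingHom τ)
  have r3 := (hr.map (evalRingHom τ')).symm
  have hdiv : ∀ p : A[X], ∃ u, p.eval τ' = p.eval τ + β ^ (K + 4) * u := by
    intro p
    obtain ⟨u, hu⟩ := hd.trans (sub_dvd_eval_sub τ' τ p)
    exact ⟨u, by linear_combination hu⟩
  choose U hU using fun i => hdiv (a' i)
  choose W hW using fun i => hdiv (b' i)
  have hev : ∀ σ : A, P.eval σ * (a' x).eval σ + Q.eval σ * (a' y).eval σ = β := by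
    intro σ
    have := congrArg (eval σ) hβ
    simpa using this
  have hqe : ∀ σ : A, ∑ i, (a' i).eval σ * (b' i).eval σ = 0 := by
    intro σ
    have := congrArg (evalRingHom σ) hq'
    simpa [map_sum] using this
  have r2 := core_lemma (fun i => (a' i).eval τ) (fun i => (b' i).eval τ)
    (fun i => (a' i).eval τ') (fun i => (b' i).eval τ') x y z hxy hxz hyz β _ _ _ _ K
    (hev τ) (hev τ') hK U W hU hW (hqe τ) (hqe τ')
  exact ((r1.trans r2).trans r3).mono (by omega)

theorem cover_lemma {A : Type*} [CommRing A] [IsNoetherianRing A] (Cov : A → Prop)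
    (h : ∀ T : Set (Ideal A), T.Finite → (∀ p ∈ T, p.IsPrime) →
      (∀ p ∈ T, ∀ q ∈ T, p ≤ q → p = q) → ∃ β, (∀ p ∈ T, β ∉ p) ∧ Cov β) (k : ℕ) :
    ∃ β : ℕ → A, (∀ i < k, Cov (β i)) ∧
      ∀ P : Ideal A, P.IsPrime → (∀ i < k, β i ∈ P) → (k : ℕ∞) ≤ P.height := by
  induction k with
  | zero => exact ⟨fun _ => 0, by simp, by simp⟩
  | succ k ih =>
    obtain ⟨β, h1, h2⟩ := ih
    let I : Ideal A := Ideal.span (β '' {i | i < k})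
    obtain ⟨γ, hγ1, hγ2⟩ := h I.minimalPrimes
      (Ideal.finite_minimalPrimes_of_isNoetherianRing A I) (fun p hp => hp.1.1)
      (fun p hp q hq hle => le_antisymm hle (hq.2 hp.1 hle))
    refine ⟨Function.update β k γ, fun i hi => ?_, fun P hP hall => ?_⟩
    · by_cases hik : i = k
      · subst hik; simpa using hγ2
      · rw [Function.update_of_ne hik]; exact h1 i (by omega)
    · have hI : I ≤ P := by
        rw [Ideal.span_le]
        rintro _ ⟨i, hi, rfl⟩
        have hi' : i < k := hi
        have := hall i (by omega)
        rwa [Function.update_of_ne (by omega)] at this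
      obtain ⟨Q, hQ, hQP⟩ := Ideal.exists_minimalPrimes_le hI
      have hQp : Q.IsPrime := hQ.1.1
      have h3 := h2 Q hQp (fun i hi => hQ.1.2 (Ideal.subset_span ⟨i, hi, rfl⟩))
      have h4 : Q < P := lt_of_le_of_ne hQP (by
        rintro rfl
        apply hγ1 Q hQ
        have := hall k (by omega)
        rwa [Function.update_self] at this)
      push_cast
      exact (add_le_add_left h3 1).trans (Ideal.height_add_one_le_of_lt_of_isPrime h4)

theorem chain_lemma {A : Type*} [CommRing A] [IsNoetherianRing A] (a b : ι → A[X]) (d : ℕ)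
    (hd : ∀ p : Ideal A, p.IsPrime → ¬ ((d + 1 : ℕ) : ℕ∞) ≤ p.height)
    (hu : UniP a b) (hq : ∑ i, a i * b i = 0) (x y z : ι) (hxy : x ≠ y) (hxz : x ≠ z)
    (hyz : y ≠ z) (hax : (a x).Monic) (hay : (a y).Monic) :
    Reach ((d + 1) * (8 * Fintype.card ι - 1))
      (fun i => (a i).eval 0) (fun i => (b i).eval 0)
      (fun i => (a i).eval 1) (fun i => (b i).eval 1) := by
  have hcard : 3 ≤ Fintype.card ι := by
    have : ({x, y, z} : Finset ι).card ≤ Fintype.card ι := Finset.card_le_univ _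
    rwa [Finset.card_eq_three.2 ⟨x, y, z, hxy, hxz, hyz, rfl⟩] at this
  obtain ⟨β, h1, h2⟩ := cover_lemma (A := A) (fun β => ∃ L : ℕ, ∀ τ τ' : A, β ^ L ∣ τ' - τ →
      Reach (8 * Fintype.card ι - 1) (fun i => (a i).eval τ) (fun i => (b i).eval τ)
        (fun i => (a i).eval τ') (fun i => (b i).eval τ')) (by
    intro T hT hp hinc
    obtain ⟨a', b', hr, β, hβ, P, Q, hPQ⟩ :=
      local_lemma a b hu x y z hxy hxz hyz hax hay T hT hp hinc
    obtain ⟨L, hL⟩ := move_lemma a b a' b' _ x y z hxy hxz hyz hq hr β P Q hPQ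
    exact ⟨β, hβ, L, fun τ τ' h => (hL τ τ' h).mono (by omega)⟩) (d + 1)
  choose! L hL using h1
  have htop : Ideal.span (Set.range fun i : Fin (d + 1) => β i ^ L i) = ⊤ := by
    by_contra hne
    obtain ⟨M, hM, hle⟩ := Ideal.exists_le_maximal _ hne
    have hMp := hM.isPrime
    refine hd M hMp (h2 M hMp fun i hi => ?_)
    exact hMp.mem_of_pow_mem (L i) (hle (Ideal.subset_span ⟨⟨i, hi⟩, rfl⟩))
  have h1m : (1 : A) ∈ Ideal.span (Set.range fun i : Fin (d + 1) => β i ^ L i) := by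
    rw [htop]; trivial
  rw [Ideal.mem_span_range_iff_exists_fun] at h1m
  obtain ⟨c, hc⟩ := h1m
  let c' : ℕ → A := fun i => if h : i < d + 1 then c ⟨i, h⟩ else 0
  have hc' : ∑ i ∈ Finset.range (d + 1), c' i * β i ^ L i = 1 := by
    rw [← hc, Finset.sum_range]
    refine Finset.sum_congr rfl fun i _ => ?_
    simp only [c', dif_pos i.2]
  have key : ∀ j, j ≤ d + 1 → Reach (j * (8 * Fintype.card ι - 1))
      (fun i => (a i).eval 0) (fun i => (b i).eval 0)
      (fun i => (a i).eval (∑ i ∈ Finset.range j, c' i * β i ^ L i))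
      (fun i => (b i).eval (∑ i ∈ Finset.range j, c' i * β i ^ L i)) := by
    intro j
    induction j with
    | zero => intro _; simpa using Reach.refl _ _ _
    | succ j ih =>
      intro hj
      rw [add_mul, one_mul]
      refine (ih (by omega)).trans (hL j (by omega) _ _ ?_)
      rw [Finset.sum_range_succ]
      simp
  have := key (d + 1) le_rfl
  rwa [hc'] at this

end MoveLem

section ColRed
variable {ι : Type*} [DecidableEq ι] [Fintype ι]

theorem Reach.m1s {R : Type*} [CommRing R] (a b : ι → R) (k : ι) (η : ι → R) (hη : η k = 0) :
    Reach (Fintype.card ι - 1) a b (Function.update a k (a k + ∑ j, η j * a j))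
      (fun j => b j - η j * b k) := by
  have := (Reach.m1 b a k (fun j => - η j) (by simp [hη])).swap
  convert this using 1
  · simp
  · funext j; ring

theorem span_ne_aux {R : Type*} [CommRing R] (a : ι → R) (x0 : ι) (f : R)
    (hf : f ∈ Ideal.span (a '' {j | j ≠ x0})) :
    ∃ η : ι → R, η x0 = 0 ∧ ∑ j, η j * a j = f := by
  have h1 : Ideal.span (a '' {j | j ≠ x0}) ≤
      Ideal.span (Set.range (Function.update a x0 0)) := by
    rw [Ideal.span_le]
    rintro _ ⟨j, hj, rfl⟩
    exact Ideal.subset_span ⟨j, by rw [Function.update_of_ne hj]⟩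
  obtain ⟨c, hc⟩ := (Ideal.mem_span_range_iff_exists_fun).1 (h1 hf)
  refine ⟨Function.update c x0 0, by simp, ?_⟩
  rw [← hc]
  refine Finset.sum_congr rfl fun j _ => ?_
  by_cases h : j = x0
  · subst h; simp
  · simp [h]

theorem clear_lemma {R : Type*} [CommRing R] (a b : ι → R) (x0 : ι) (ha : a x0 = 1)
    (hq : ∑ i, a i * b i = 0) :
    Reach (2 * (Fintype.card ι - 1)) a b (Pi.single x0 1) 0 := by
  have r1 := Reach.m1 a b x0 (Function.update (fun j => - a j) x0 0) (by simp)
  set b1 := Function.update b x0 (b x0 - ∑ j, Function.update (fun j => - a j) x0 0 j * b j)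
  have e1 : (fun j => a j + Function.update (fun j => - a j) x0 0 j * a x0) =
      (Pi.single x0 1 : ι → R) := by
    funext j
    by_cases h : j = x0
    · subst h; simp [ha]
    · simp [h, ha]
  rw [e1] at r1
  have hq1 := r1.quad
  rw [hq] at hq1
  have hb1 : b1 x0 = 0 := by
    rw [← hq1, Finset.sum_eq_single x0] <;> simp +contextual
  have r2 := (Reach.m2 b1 (Pi.single x0 1) x0 (Function.update (fun j => - b1 j) x0 0)
    (by simp)).swap
  have : (fun j => if j = x0 then b1 x0 - ∑ j, Function.update (fun j => - b1 j) x0 0 j *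
      (Pi.single x0 1 : ι → R) j else b1 j + Function.update (fun j => - b1 j) x0 0 j *
      (Pi.single x0 1 : ι → R) x0) = 0 := by
    funext j
    by_cases h : j = x0
    · subst h
      simp only [if_true, hb1, Pi.zero_apply]
      rw [Finset.sum_eq_zero]; · simp
      intro i _
      by_cases h : i = j
      · subst h; simp
      · simp [h]
    · simp [h]
  rw [this] at r2
  exact (r1.trans r2).mono (by omega)

theorem base_red {R : Type*} [CommRing R] [IsNoetherianRing R] (a b : ι → R) (x0 : ι)
    (hR : ∀ p : Ideal R, p.IsPrime → ¬ ((Fintype.card ι - 1 : ℕ) : ℕ∞) ≤ p.height)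
    (hu : UniP a b) (hq : ∑ i, a i * b i = 0) :
    Reach (Fintype.card ι * (2 * (Fintype.card ι - 1)) + 3 * (Fintype.card ι - 1)) a b
      (Pi.single x0 1) 0 := by
  obtain ⟨a2, b2, r1, h1⟩ := h_lemma a b hu x0
  have htop : Ideal.span (a2 '' {j | j ≠ x0}) = ⊤ := by
    by_contra hne
    obtain ⟨M, hM, hle⟩ := Ideal.exists_le_maximal _ hne
    exact hR M hM.isPrime (h1 M hM.isPrime fun j hj => hle (Ideal.subset_span ⟨j, hj, rfl⟩))
  obtain ⟨η, hη0, hη⟩ := span_ne_aux a2 x0 (1 - a2 x0) (by rw [htop]; trivial)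
  have r2 := r1.trans (Reach.m1s a2 b2 x0 η hη0)
  rw [hη] at r2
  have r3 := clear_lemma _ _ x0 (by simp) (r2.quad.trans hq)
  exact (r2.trans r3).mono (by omega)

open Polynomial in
theorem col_red {C : Type u} [CommRing C] [IsNoetherianRing C] (n D : ℕ)
    (hdim : ringKrullDim C = (D : WithBot ℕ∞)) (hr : D + 2 ≤ Fintype.card ι)
    (x y z : ι) (hxy : x ≠ y) (hxz : x ≠ z) (hyz : y ≠ z)
    (a b : ι → MvPolynomial (Fin n) C) (hu : UniP a b) (hq : ∑ i, a i * b i = 0) :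
    Reach (2 * (Fintype.card ι * (2 * (Fintype.card ι - 1))) + 2 * Fintype.card ι +
      3 * (Fintype.card ι - 1) + (n + D + 1) * (8 * Fintype.card ι - 1)) a b (Pi.single x 1) 0 := by
  have hC : ∀ k : ℕ, D < k → ∀ p : Ideal C, p.IsPrime → ¬ (k : ℕ∞) ≤ p.height := by
    intro k hk p hp hle
    have h1 := Ideal.height_le_ringKrullDim_of_isPrime (I := p)
    rw [hdim] at h1
    have h2 : ((k : ℕ∞) : WithBot ℕ∞) ≤ ((D : ℕ∞) : WithBot ℕ∞) :=
      (WithBot.coe_le_coe.2 hle).trans h1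
    have h3 : k ≤ D := by exact_mod_cast h2
    omega
  have hA : ∀ p : Ideal (MvPolynomial (Fin n) C), p.IsPrime →
      ¬ ((n + D + 1 : ℕ) : ℕ∞) ≤ p.height := by
    intro p hp hle
    have h1 := Ideal.height_le_ringKrullDim_of_isPrime (I := p)
    rw [MvPolynomial.ringKrullDim_of_isNoetherianRing, hdim] at h1
    have h2 : (((n + D + 1 : ℕ) : ℕ∞) : WithBot ℕ∞) ≤ (((D + n : ℕ) : ℕ∞) : WithBot ℕ∞) := by
      refine (WithBot.coe_le_coe.2 hle).trans (h1.trans (le_of_eq ?_))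
      simp
    have h3 : n + D + 1 ≤ D + n := by exact_mod_cast h2
    omega
  obtain ⟨a1, b1, r1, h1⟩ := h_lemma a b hu x
  obtain ⟨f, hfI, k, hk, hmon⟩ := suslin_monic ((D + 1 : ℕ) : ℕ∞) (hC _ (by omega)) n
    (Ideal.span (a1 '' {j | j ≠ x})) (by
      intro P hP hle
      refine le_trans ?_ (h1 P hP fun j hj => hle (Ideal.subset_span ⟨j, hj, rfl⟩))
      exact_mod_cast (by omega : D + 1 ≤ Fintype.card ι - 1))
  obtain ⟨η, hη0, hη⟩ := span_ne_aux a1 x f hfI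
  let φ : MvPolynomial (Fin n) C →ₐ[C] (MvPolynomial (Fin n) C)[X] :=
    MvPolynomial.aeval (fun i => Polynomial.C (MvPolynomial.X i - 1) * X + X ^ (k i))
  have hφm : (φ f).Monic := hmon (MvPolynomial (Fin n) C) (fun i => MvPolynomial.X i - 1)
  have hφ1 : ∀ p, (φ p).eval 1 = p := by
    have : ((aeval (R := MvPolynomial (Fin n) C) (1 : MvPolynomial (Fin n) C)).restrictScalars C).comp φ = AlgHom.id C _ := by
      refine MvPolynomial.algHom_ext fun i => ?_
      simp [φ]
    intro p
    have := DFunLike.congr_fun this p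
    simpa [aeval_def] using this
  have hφ0 : ∀ p, (φ p).eval 0 = MvPolynomial.C (MvPolynomial.aeval (fun _ => (0 : C)) p) := by
    have : ((aeval (R := MvPolynomial (Fin n) C) (0 : MvPolynomial (Fin n) C)).restrictScalars C).comp φ = (Algebra.ofId C (MvPolynomial (Fin n) C)).comp (MvPolynomial.aeval (fun _ => (0 : C))) := by
      refine MvPolynomial.algHom_ext fun i => ?_
      have : k i ≠ 0 := by have := hk i; omega
      simp [φ, this]
    intro p
    have := DFunLike.congr_fun this p
    simpa [aeval_def, Algebra.ofId_apply, MvPolynomial.algebraMap_eq] using this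
  have hq1 : ∑ i, a1 i * b1 i = 0 := r1.quad.trans hq
  have hu1 : UniP a1 b1 := r1.uni hu
  obtain ⟨N, hN⟩ := monic_shift (φ f) (φ (a1 x)) hφm
  have r2 := Reach.m1s (fun i => φ (a1 i)) (fun i => φ (b1 i)) x (fun j => X ^ N * φ (η j))
    (by simp [hη0])
  have hs : ∑ j, X ^ N * φ (η j) * φ (a1 j) = X ^ N * φ f := by
    rw [← hη, map_sum, Finset.mul_sum]
    exact Finset.sum_congr rfl fun j _ => by rw [map_mul, mul_assoc]
  simp only [hs] at r2
  set a2 := Function.update (fun i => φ (a1 i)) x (φ (a1 x) + X ^ N * φ f) with ha2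
  set b2 := (fun j => φ (b1 j) - X ^ N * φ (η j) * φ (b1 x)) with hb2
  have ha2x : (a2 x).Monic := by rw [ha2, Function.update_self]; exact hN
  obtain ⟨N', hN'⟩ := monic_shift (a2 x) (a2 y) ha2x
  have r3 := r2.trans (Reach.one (Stp.s1 a2 b2 y x (X ^ N') hxy.symm))
  set a3 := Function.update a2 y (a2 y + X ^ N' * a2 x) with ha3
  set b3 := Function.update b2 x (b2 x - X ^ N' * b2 y)
  have hq2 : ∑ i, φ (a1 i) * φ (b1 i) = 0 := by
    have := congrArg φ hq1
    simpa [map_sum] using this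
  have r4 := (chain_lemma a3 b3 (n + D) hA (r3.uni (hu1.map φ.toRingHom)) (r3.quad.trans hq2)
    x y z hxy hxz hyz (by rw [ha3, Function.update_of_ne hxy]; exact ha2x)
    (by rw [ha3, Function.update_self]; exact hN')).symm
  have r5 := r3.map (evalRingHom 1)
  have r6 := (r3.map (evalRingHom 0)).symm
  have e5a : (fun i => evalRingHom 1 (φ (a1 i))) = a1 := funext fun i => hφ1 _
  have e5b : (fun i => evalRingHom 1 (φ (b1 i))) = b1 := funext fun i => hφ1 _
  rw [e5a, e5b] at r5
  have e6a : (fun i => evalRingHom 0 (φ (a1 i))) =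
    fun i => MvPolynomial.C (MvPolynomial.aeval (fun _ => (0 : C)) (a1 i)) := funext fun i => hφ0 _
  have e6b : (fun i => evalRingHom 0 (φ (b1 i))) =
    fun i => MvPolynomial.C (MvPolynomial.aeval (fun _ => (0 : C)) (b1 i)) := funext fun i => hφ0 _
  rw [e6a, e6b] at r6
  have hq3 : ∑ i, MvPolynomial.aeval (fun _ => (0 : C)) (a1 i) *
      MvPolynomial.aeval (fun _ => (0 : C)) (b1 i) = 0 := by
    have := congrArg (MvPolynomial.aeval (fun _ : Fin n => (0 : C))) hq1
    simpa [map_sum] using this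
  have r7 := (base_red (fun i => MvPolynomial.aeval (fun _ => (0 : C)) (a1 i))
    (fun i => MvPolynomial.aeval (fun _ => (0 : C)) (b1 i)) x (hC _ (by omega))
    (hu1.map (MvPolynomial.aeval (fun _ : Fin n => (0 : C))).toRingHom) hq3).map
      (MvPolynomial.C (σ := Fin n))
  have e7a : (fun i => MvPolynomial.C (σ := Fin n) ((Pi.single x 1 : ι → C) i)) =
      Pi.single x 1 := by
    funext i
    by_cases h : i = x
    · subst h; simp
    · simp [h]
  have e7b : (fun i => MvPolynomial.C (σ := Fin n) ((0 : ι → C) i)) = 0 := by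
    funext i; simp
  rw [e7a, e7b] at r7
  refine ((((r1.trans r5).trans r4).trans r6).trans r7).mono ?_
  omega

end ColRed

section MatLem
set_option linter.unusedSectionVars false
variable {R : Type*} [CommRing R]

/-- Lower half of a vector. -/
def loE (r : ℕ) (v : Fin (2 * r) → R) : Fin r → R := fun i => v ⟨i.val, by omega⟩

/-- Upper half of a vector. -/
def hiE (r : ℕ) (v : Fin (2 * r) → R) : Fin r → R := fun i => v ⟨2 * r - 1 - i.val, by omega⟩

theorem quadE_eq (r : ℕ) (v : Fin (2 * r) → R) : quadE r v = ∑ i, loE r v i * hiE r v i := rfl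

theorem lohi_ext (r : ℕ) (v w : Fin (2 * r) → R) (h1 : loE r v = loE r w)
    (h2 : hiE r v = hiE r w) : v = w := by
  funext k
  by_cases hk : k.val < r
  · exact congrFun h1 ⟨k.val, hk⟩
  · have := congrFun h2 ⟨2 * r - 1 - k.val, by omega⟩
    simp only [hiE] at this
    have e : (⟨2 * r - 1 - (2 * r - 1 - k.val), by omega⟩ : Fin (2 * r)) = k :=
      Fin.ext (by simp; omega)
    rwa [e] at this

theorem TE_mulVec (r : ℕ) (i j : Fin (2 * r)) (ξ : R) (v : Fin (2 * r) → R) (k : Fin (2 * r)) :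
    (TE r i j ξ *ᵥ v) k = v k + (if k = i then ξ * v j else 0) -
      (if k = negE r j then ξ * v (negE r i) else 0) := by
  simp only [TE, Matrix.sub_mulVec, Matrix.add_mulVec, Matrix.one_mulVec, Pi.sub_apply,
    Pi.add_apply, Matrix.smul_mulVec, Pi.smul_apply, Matrix.single_mulVec, smul_eq_mul,
    Function.update_apply, Pi.zero_apply, one_mul, mul_ite, mul_zero]

theorem s1_mat (r : ℕ) (i j : Fin r) (ξ : R) (hij : i ≠ j) :
    ∃ M : Matrix (Fin (2 * r)) (Fin (2 * r)) R, IsElemE r M ∧ ∀ v,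
      loE r (M *ᵥ v) = Function.update (loE r v) i (loE r v i + ξ * loE r v j) ∧
      hiE r (M *ᵥ v) = Function.update (hiE r v) j (hiE r v j - ξ * hiE r v i) := by
  have hij' : i.val ≠ j.val := fun h => hij (Fin.ext h)
  refine ⟨TE r ⟨i.val, by omega⟩ ⟨j.val, by omega⟩ ξ, ⟨_, _, ξ, ?_, ?_, rfl⟩, fun v => ⟨?_, ?_⟩⟩
  · simp [Fin.ext_iff]; omega
  · simp [Fin.ext_iff, negE]; omega
  · funext k
    have h1 : ¬ (k.val = 2 * r - 1 - j.val) := by omega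
    by_cases hk : k = i
    · subst hk; simp [loE, TE_mulVec, negE, Fin.ext_iff, h1]
    · have hk' : k.val ≠ i.val := fun h => hk (Fin.ext h)
      simp [loE, TE_mulVec, negE, Fin.ext_iff, h1, hk, hk']
  · funext k
    have h1 : ¬ (2 * r - 1 - k.val = i.val) := by omega
    by_cases hk : k = j
    · subst hk; simp [hiE, TE_mulVec, negE, Fin.ext_iff, h1]
    · have hk' : ¬ (2 * r - 1 - k.val = 2 * r - 1 - j.val) := fun h => hk (Fin.ext (by omega))
      simp [hiE, TE_mulVec, negE, Fin.ext_iff, h1, hk, hk']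

theorem s2_mat (r : ℕ) (i j : Fin r) (ξ : R) (hij : i ≠ j) :
    ∃ M : Matrix (Fin (2 * r)) (Fin (2 * r)) R, IsElemE r M ∧ ∀ v,
      loE r (M *ᵥ v) = Function.update (Function.update (loE r v) i (loE r v i + ξ * hiE r v j))
        j (loE r v j - ξ * hiE r v i) ∧
      hiE r (M *ᵥ v) = hiE r v := by
  have hij' : i.val ≠ j.val := fun h => hij (Fin.ext h)
  have hj2 : 2 * r - 1 - (2 * r - 1 - j.val) = j.val := by omega
  refine ⟨TE r ⟨i.val, by omega⟩ ⟨2 * r - 1 - j.val, by omega⟩ ξ, ⟨_, _, ξ, ?_, ?_, rfl⟩,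
    fun v => ⟨?_, ?_⟩⟩
  · simp [Fin.ext_iff]; omega
  · simp [Fin.ext_iff, negE]; omega
  · funext k
    by_cases hk : k = i
    · subst hk; simp [loE, hiE, TE_mulVec, negE, Fin.ext_iff, hij, hij', hj2]
    · have hk' : k.val ≠ i.val := fun h => hk (Fin.ext h)
      by_cases hkj : k = j
      · subst hkj; simp [loE, hiE, TE_mulVec, negE, Fin.ext_iff, hk', hj2]
      · have hkj' : k.val ≠ j.val := fun h => hkj (Fin.ext h)
        simp [loE, TE_mulVec, negE, Fin.ext_iff, hk, hk', hj2, hkj, hkj']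
  · funext k
    have h1 : ¬ (2 * r - 1 - k.val = i.val) := by omega
    have h2 : ¬ (2 * r - 1 - k.val = j.val) := by omega
    simp [hiE, TE_mulVec, negE, Fin.ext_iff, h1, h2, hj2]

theorem s3_mat (r : ℕ) (i j : Fin r) (ξ : R) (hij : i ≠ j) :
    ∃ M : Matrix (Fin (2 * r)) (Fin (2 * r)) R, IsElemE r M ∧ ∀ v,
      loE r (M *ᵥ v) = loE r v ∧
      hiE r (M *ᵥ v) = Function.update (Function.update (hiE r v) i (hiE r v i + ξ * loE r v j))
        j (hiE r v j - ξ * loE r v i) := by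
  have hij' : i.val ≠ j.val := fun h => hij (Fin.ext h)
  have hj2 : 2 * r - 1 - (2 * r - 1 - i.val) = i.val := by omega
  refine ⟨TE r ⟨2 * r - 1 - i.val, by omega⟩ ⟨j.val, by omega⟩ ξ, ⟨_, _, ξ, ?_, ?_, rfl⟩,
    fun v => ⟨?_, ?_⟩⟩
  · simp [Fin.ext_iff]; omega
  · simp [Fin.ext_iff, negE]; omega
  · funext k
    have h1 : ¬ (k.val = 2 * r - 1 - i.val) := by omega
    have h2 : ¬ (k.val = 2 * r - 1 - j.val) := by omega
    simp [loE, TE_mulVec, negE, Fin.ext_iff, h1, h2]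
  · funext k
    by_cases hk : k = i
    · subst hk
      have h1 : ¬ (2 * r - 1 - k.val = 2 * r - 1 - j.val) := by omega
      simp [loE, hiE, TE_mulVec, negE, Fin.ext_iff, hij, h1, hj2]
    · have hk' : ¬ (2 * r - 1 - k.val = 2 * r - 1 - i.val) := fun h => hk (Fin.ext (by omega))
      by_cases hkj : k = j
      · subst hkj; simp [loE, hiE, TE_mulVec, negE, Fin.ext_iff, hk', hj2]
      · have hkj' : ¬ (2 * r - 1 - k.val = 2 * r - 1 - j.val) := fun h => hkj (Fin.ext (by omega))
        simp [hiE, TE_mulVec, negE, Fin.ext_iff, hk, hk', hj2, hkj, hkj']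

/-- Lists of elementary matrices preserving the form. -/
def GoodL (r : ℕ) (L : List (Matrix (Fin (2 * r)) (Fin (2 * r)) R)) : Prop :=
  (∀ M ∈ L, IsElemE r M) ∧ ∀ v, quadE r (L.prod *ᵥ v) = quadE r v

theorem GoodL.nil (r : ℕ) : GoodL (R := R) r [] := ⟨by simp, by simp⟩

theorem GoodL.cons {r : ℕ} {L : List (Matrix (Fin (2 * r)) (Fin (2 * r)) R)} (h : GoodL r L)
    {M : Matrix (Fin (2 * r)) (Fin (2 * r)) R} (h1 : IsElemE r M)
    (h2 : ∀ v, Stp (loE r v) (hiE r v) (loE r (M *ᵥ v)) (hiE r (M *ᵥ v))) :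
    GoodL r (M :: L) := by
  refine ⟨?_, fun v => ?_⟩
  · intro N hN
    rcases List.mem_cons.1 hN with rfl | hN
    · exact h1
    · exact h.1 N hN
  · rw [List.prod_cons, ← Matrix.mulVec_mulVec, quadE_eq, (Reach.one (h2 _)).quad, ← quadE_eq,
      h.2]

theorem reach_mat (r : ℕ) {m : ℕ} {a b a' b' : Fin r → R} (h : Reach m a b a' b')
    (v : Fin (2 * r) → R) (h1 : loE r v = a) (h2 : hiE r v = b) :
    ∃ L, L.length ≤ m ∧ GoodL r L ∧ loE r (L.prod *ᵥ v) = a' ∧ hiE r (L.prod *ᵥ v) = b' := by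
  induction h with
  | refl => exact ⟨[], by simp, GoodL.nil r, by simpa using h1, by simpa using h2⟩
  | tail h s ih =>
    obtain ⟨L, hl, hL, e1, e2⟩ := ih h1 h2
    cases s with
    | s1 i j ξ hij =>
      obtain ⟨M, hM, hv⟩ := s1_mat r i j ξ hij
      refine ⟨M :: L, by simpa using hl, hL.cons hM fun v => ?_, ?_, ?_⟩
      · rw [(hv v).1, (hv v).2]; exact Stp.s1 _ _ _ _ _ hij
      · rw [List.prod_cons, ← Matrix.mulVec_mulVec, (hv _).1, e1]
      · rw [List.prod_cons, ← Matrix.mulVec_mulVec, (hv _).2, e2]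
    | s2 i j ξ hij =>
      obtain ⟨M, hM, hv⟩ := s2_mat r i j ξ hij
      refine ⟨M :: L, by simpa using hl, hL.cons hM fun v => ?_, ?_, ?_⟩
      · rw [(hv v).1, (hv v).2]; exact Stp.s2 _ _ _ _ _ hij
      · rw [List.prod_cons, ← Matrix.mulVec_mulVec, (hv _).1, e1, e2]
      · rw [List.prod_cons, ← Matrix.mulVec_mulVec, (hv _).2, e2]
    | s3 i j ξ hij =>
      obtain ⟨M, hM, hv⟩ := s3_mat r i j ξ hij
      refine ⟨M :: L, by simpa using hl, hL.cons hM fun v => ?_, ?_, ?_⟩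
      · rw [(hv v).1, (hv v).2]; exact Stp.s3 _ _ _ _ _ hij
      · rw [List.prod_cons, ← Matrix.mulVec_mulVec, (hv _).1, e1]
      · rw [List.prod_cons, ← Matrix.mulVec_mulVec, (hv _).2, e1, e2]

/-- Clearing the last column. -/
theorem last_col (r : ℕ) (x0 : Fin r) (e w : Fin (2 * r) → R)
    (he1 : ∀ j, j ≠ x0 → loE r e j = 0) (he2 : hiE r e = 0) (hw : hiE r w x0 = 1)
    (S : Finset (Fin r)) (hS : x0 ∉ S) :
    ∃ L, L.length ≤ 2 * S.card ∧ GoodL r L ∧ L.prod *ᵥ e = e ∧ hiE r (L.prod *ᵥ w) x0 = 1 ∧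
      ∀ j ∈ S, loE r (L.prod *ᵥ w) j = 0 ∧ hiE r (L.prod *ᵥ w) j = 0 := by
  induction S using Finset.induction_on with
  | empty => exact ⟨[], by simp, GoodL.nil r, by simp, by simpa using hw, by simp⟩
  | insert i S hi ih =>
    have hxi : x0 ≠ i := fun h => hS (by simp [h])
    have hxS : x0 ∉ S := fun h => hS (Finset.mem_insert_of_mem h)
    obtain ⟨L, hl, hL, h1, h2, h3⟩ := ih hxS
    obtain ⟨M, hM, hv⟩ := s1_mat r x0 i (hiE r (L.prod *ᵥ w) i) hxi
    obtain ⟨M', hM', hv'⟩ := s2_mat r i x0 (- loE r (L.prod *ᵥ w) i) hxi.symm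
    have e1 : M *ᵥ e = e := by
      apply lohi_ext
      · rw [(hv e).1, he1 i hxi.symm]; simp
      · rw [(hv e).2, he2]; simp
    have e2 : M' *ᵥ e = e := by
      apply lohi_ext
      · rw [(hv' e).1, he2]; simp
      · rw [(hv' e).2]
    have hLM : GoodL r (M :: L) := hL.cons hM fun v => by
      rw [(hv v).1, (hv v).2]; exact Stp.s1 _ _ _ _ _ hxi
    refine ⟨M' :: M :: L, ?_, hLM.cons hM' fun v => ?_, ?_, ?_, ?_⟩
    · rw [Finset.card_insert_of_notMem hi]; simp; omega
    · rw [(hv' v).1, (hv' v).2]; exact Stp.s2 _ _ _ _ _ hxi.symm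
    · rw [List.prod_cons, List.prod_cons, ← Matrix.mulVec_mulVec, ← Matrix.mulVec_mulVec, h1, e1,
        e2]
    · rw [List.prod_cons, List.prod_cons, ← Matrix.mulVec_mulVec, ← Matrix.mulVec_mulVec,
        (hv' _).2, (hv _).2, Function.update_of_ne hxi, h2]
    · intro j hj
      rw [List.prod_cons, List.prod_cons, ← Matrix.mulVec_mulVec, ← Matrix.mulVec_mulVec,
        (hv' _).2, (hv' _).1, (hv _).2, (hv _).1]
      have hjx : j ≠ x0 := fun h => hS (h ▸ hj)
      by_cases hji : j = i
      · subst hji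
        simp [hxi, hxi.symm, h2]
      · have hjS : j ∈ S := (Finset.mem_insert.1 hj).resolve_left hji
        simp [hji, hjx, h3 j hjS]

theorem sum_two_mul (r : ℕ) (f : Fin (2 * r) → R) :
    ∑ k, f k = ∑ i, (loE r f i + hiE r f i) := by
  rw [← Equiv.sum_comp (finCongr (two_mul r)).symm f, Fin.sum_univ_add, Finset.sum_add_distrib]
  congr 1
  rw [← Equiv.sum_comp Fin.revPerm]
  refine Finset.sum_congr rfl fun i _ => ?_
  simp only [hiE]
  congr 1
  apply Fin.ext
  simp
  omega

theorem polar_eq (r : ℕ) (x y : Fin (2 * r) → R) :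
    quadE r (x + y) - quadE r x - quadE r y = ∑ k, x (negE r k) * y k := by
  rw [sum_two_mul]
  simp only [quadE, ← Finset.sum_sub_distrib]
  refine Finset.sum_congr rfl fun i _ => ?_
  have h : (⟨2 * r - 1 - (2 * r - 1 - i.val), by omega⟩ : Fin (2 * r)) = ⟨i.val, by omega⟩ :=
    Fin.ext (by simp; omega)
  simp only [loE, hiE, negE, Pi.add_apply, h]
  ring

theorem polar_iso (r : ℕ) (g : Matrix (Fin (2 * r)) (Fin (2 * r)) R)
    (hg : ∀ x, quadE r (g *ᵥ x) = quadE r x) (x y : Fin (2 * r) → R) :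
    ∑ k, (g *ᵥ x) (negE r k) * (g *ᵥ y) k = ∑ k, x (negE r k) * y k := by
  rw [← polar_eq, ← polar_eq, ← Matrix.mulVec_add, hg, hg, hg]

theorem negE_negE (r : ℕ) (k : Fin (2 * r)) : negE r (negE r k) = k :=
  Fin.ext (by simp [negE]; omega)

theorem iso_fix (r : ℕ) (g : Matrix (Fin (2 * r)) (Fin (2 * r)) R)
    (hg : ∀ x, quadE r (g *ᵥ x) = quadE r x) (k : Fin (2 * r))
    (hk : g *ᵥ Pi.single k 1 = Pi.single k 1) (x : Fin (2 * r) → R) :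
    (g *ᵥ x) (negE r k) = x (negE r k) := by
  have := polar_iso r g hg x (Pi.single k 1)
  rw [hk] at this
  simpa [Pi.single_apply] using this

theorem iso_unit (r : ℕ) (g : Matrix (Fin (2 * r)) (Fin (2 * r)) R)
    (hg : ∀ x, quadE r (g *ᵥ x) = quadE r x) : IsUnit g := by
  let L : Matrix (Fin (2 * r)) (Fin (2 * r)) R := fun k m => g (negE r m) (negE r k)
  have : L * g = 1 := by
    ext k l
    have h := polar_iso r g hg (Pi.single (negE r k) 1) (Pi.single l 1)
    simp only [Matrix.mulVec_single_one, Matrix.col_apply] at h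
    rw [Matrix.mul_apply]
    refine h.trans ?_
    rw [Finset.sum_eq_single l]
    · by_cases hkl : k = l
      · subst hkl; simp
      · have : negE r l ≠ negE r k := fun h => hkl (by rw [← negE_negE r k, ← h, negE_negE])
        simp [hkl, this]
    · intro m _ hm; simp [hm]
    · simp
  exact IsUnit.of_mul_eq_one_right L this

end MatLem

section MainAux

theorem bound_aux (n D r : ℕ) (hr3 : 3 ≤ r) (hrD : D + 2 ≤ r) :
    2 * (r * (2 * (r - 1))) + 2 * r + 3 * (r - 1) + (n + D + 1) * (8 * r - 1) + 2 * (r - 1) ≤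
      n * (11 * r - 7) +
          (n * D + r * (r - 1) / 2) * (r * (r - 1) / 2 + (r - 1 + 1) / 2 + 8 * r - 2) +
            10 * r - 10 := by
  obtain ⟨q, rfl⟩ : ∃ q, r = q + 1 := ⟨r - 1, by omega⟩
  have hq2 : 2 ≤ q := by omega
  have hq : q + 1 - 1 = q := by omega
  rw [hq]
  have hev : 2 ∣ (q + 1) * q := by
    rw [mul_comm]; exact (Nat.even_mul_succ_self q).two_dvd
  obtain ⟨T, hT⟩ := hev
  have hT2 : (q + 1) * q / 2 = T := by omega
  rw [hT2]
  obtain ⟨M, hM, hMle⟩ : ∃ M, T + (q + 1) / 2 + 8 * (q + 1) - 2 = M ∧ T + 8 * q + 7 ≤ M :=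
    ⟨_, rfl, by omega⟩
  rw [hM]
  have e1 : 8 * (q + 1) - 1 = 8 * q + 7 := by omega
  have e2 : 11 * (q + 1) - 7 = 11 * q + 4 := by omega
  have e3 : 2 * ((q + 1) * (2 * q)) = 8 * T := by
    rw [show 2 * ((q + 1) * (2 * q)) = 4 * ((q + 1) * q) by ring, hT]; ring
  rw [e1, e2, e3]
  have h1 : (n * D + T) * M ≥ T * (T + 8 * q + 7) := Nat.mul_le_mul (by omega) hMle
  have h2 : n * (8 * q + 7) ≤ n * (11 * q + 4) := Nat.mul_le_mul le_rfl (by omega)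
  have h3 : (n + D + 1) * (8 * q + 7) ≤ n * (8 * q + 7) + q * (8 * q + 7) := by
    rw [add_assoc, add_mul]
    exact Nat.add_le_add_left (Nat.mul_le_mul (by omega) le_rfl) _
  have h4 : 8 * T + 2 * (q + 1) + 3 * q + q * (8 * q + 7) + 2 * q ≤
      T * (T + 8 * q + 7) + 10 * q := by
    by_cases hq4 : q < 4
    · interval_cases q
      · have : T = 3 := by omega
        subst this; norm_num
      · have : T = 6 := by omega
        subst this; norm_num
    · have h5 : 8 ≤ T := by nlinarith
      have h6 : q ≤ T := by nlinarith
      nlinarith [Nat.mul_le_mul h5 (le_refl T), Nat.mul_le_mul h6 (le_refl (8 * q + 7))]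
  omega


theorem quad_inner {R : Type*} [CommRing R] (r : ℕ) (hr : 1 ≤ r) (Y : Fin (2 * r) → R)
    (y : Fin (2 * (r - 1)) → R) (h0 : Y ⟨0, by omega⟩ = 0)
    (hy : ∀ i : Fin (2 * (r - 1)), Y ⟨i.val + 1, by omega⟩ = y i) :
    quadE r Y = quadE (r - 1) y := by
  obtain ⟨s, rfl⟩ : ∃ s, r = s + 1 := ⟨r - 1, by omega⟩
  change quadE (s + 1) Y = quadE s y
  unfold quadE
  rw [Fin.sum_univ_succ]
  simp only [Fin.val_zero, h0, zero_mul, zero_add]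
  refine Finset.sum_congr rfl fun i _ => ?_
  have h1 := hy ⟨i.val, by omega⟩
  have h2 := hy ⟨2 * s - 1 - i.val, by omega⟩
  rw [← h1, ← h2]
  congr 2
  apply Fin.ext
  simp
  omega

theorem sumE_inner {R : Type*} [CommRing R] (r : ℕ) (hr : 1 ≤ r) (F : Fin (2 * r) → R)
    (h0 : F ⟨0, by omega⟩ = 0) (h1 : F ⟨2 * r - 1, by omega⟩ = 0) :
    ∑ k, F k = ∑ j : Fin (2 * (r - 1)), F ⟨j.val + 1, by omega⟩ := by
  obtain ⟨s, rfl⟩ : ∃ s, r = s + 1 := ⟨r - 1, by omega⟩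
  change ∑ k : Fin (2 * s + 1 + 1), F k = ∑ j : Fin (2 * s), F ⟨j.val + 1, by omega⟩
  rw [Fin.sum_univ_succ, Fin.sum_univ_castSucc]
  have e0 : F (0 : Fin (2 * s + 1 + 1)) = 0 := h0
  have e1 : F (Fin.last (2 * s)).succ = 0 := h1
  rw [e0, e1, zero_add, add_zero]
  rfl

end MainAux

/-- Bounded reduction for the even split orthogonal group over a polynomial ring:
any `g ∈ O(2r, C[x_1,…,x_n])` can be reduced by at most
`N = n(11r−7) + (nD + r(r−1)/2)(r(r−1)/2 + ⌈(r−1)/2⌉ + 8r−2) + 10r−10`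
elementary orthogonal transvections (multiplied from the left) to `diag(1, β, 1)`
with `β ∈ O(2r−2, C[x_1,…,x_n])`. -/
theorem even_matrix_bounded_reduction
    (C : Type*) [CommRing C] [IsNoetherianRing C] (n D : ℕ)
    (hdim : ringKrullDim C = (D : WithBot ℕ∞))
    (r : ℕ) (hr : max 3 (D + 2) ≤ r)
    (g : Matrix (Fin (2 * r)) (Fin (2 * r)) (MvPolynomial (Fin n) C))
    (hg : g ∈ OE r (MvPolynomial (Fin n) C)) :
    ∃ E ∈ EOE r
        (n * (11 * r - 7) +
          (n * D + r * (r - 1) / 2) * (r * (r - 1) / 2 + (r - 1 + 1) / 2 + 8 * r - 2) +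
            10 * r - 10)
        (MvPolynomial (Fin n) C),
      ∃ β ∈ OE (r - 1) (MvPolynomial (Fin n) C),
        (E * g) ⟨0, by omega⟩ ⟨0, by omega⟩ = 1 ∧
        (E * g) ⟨2 * r - 1, by omega⟩ ⟨2 * r - 1, by omega⟩ = 1 ∧
        (∀ j : Fin (2 * r), j.val ≠ 0 →
          (E * g) ⟨0, by omega⟩ j = 0 ∧ (E * g) j ⟨0, by omega⟩ = 0) ∧
        (∀ j : Fin (2 * r), j.val ≠ 2 * r - 1 →
          (E * g) ⟨2 * r - 1, by omega⟩ j = 0 ∧ (E * g) j ⟨2 * r - 1, by omega⟩ = 0) ∧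
        ∀ i j : Fin (2 * (r - 1)),
          (E * g) ⟨i.val + 1, by omega⟩ ⟨j.val + 1, by omega⟩ = β i j := by
  have hr3 : 3 ≤ r := le_trans (le_max_left _ _) hr
  have hrD : D + 2 ≤ r := le_trans (le_max_right _ _) hr
  obtain ⟨hgu, hgq⟩ := hg
  have i0 : 0 < 2 * r := by omega
  have il : 2 * r - 1 < 2 * r := by omega
  set k0 : Fin (2 * r) := ⟨0, i0⟩ with hk0
  set kl : Fin (2 * r) := ⟨2 * r - 1, il⟩ with hkl
  have hneg0 : negE r k0 = kl := Fin.ext (by simp [negE, hk0, hkl])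
  have hnegl : negE r kl = k0 := by rw [← hneg0, negE_negE]
  let x0 : Fin r := ⟨0, by omega⟩
  let e0 : Fin (2 * r) → MvPolynomial (Fin n) C := Pi.single k0 1
  let el : Fin (2 * r) → MvPolynomial (Fin n) C := Pi.single kl 1
  have hlo0 : loE r e0 = Pi.single x0 1 := by
    funext i
    simp [loE, e0, x0, Pi.single_apply, hk0, Fin.ext_iff]
  have hhi0 : hiE r e0 = 0 := by
    funext i
    have : ¬ (2 * r - 1 - i.val = 0) := by omega
    simp [hiE, e0, Pi.single_apply, hk0, Fin.ext_iff, this]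
  have hlol : loE r el = 0 := by
    funext i
    have : ¬ (i.val = 2 * r - 1) := by omega
    simp [loE, el, Pi.single_apply, hkl, Fin.ext_iff, this]
  have hhil : hiE r el = Pi.single x0 1 := by
    funext i
    have : (2 * r - 1 - i.val = 2 * r - 1) ↔ i.val = 0 := by omega
    simp [hiE, el, x0, Pi.single_apply, hkl, Fin.ext_iff, this]
  have hqe0 : quadE r e0 = 0 := by rw [quadE_eq, hhi0]; simp
  have hqel : quadE r el = 0 := by rw [quadE_eq, hlol]; simp
  -- first column
  let v := g *ᵥ e0
  have hqv : ∑ i, loE r v i * hiE r v i = 0 := by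
    rw [← quadE_eq, hgq, hqe0]
  have huv : UniP (loE r v) (hiE r v) := by
    intro P hP h1 h2
    have h3 : ∀ k, v k ∈ P := by
      intro k
      by_cases hk : k.val < r
      · exact h1 ⟨k.val, hk⟩
      · have := h2 ⟨2 * r - 1 - k.val, by omega⟩
        simp only [hiE] at this
        have e : (⟨2 * r - 1 - (2 * r - 1 - k.val), by omega⟩ : Fin (2 * r)) = k :=
          Fin.ext (by simp; omega)
        rwa [e] at this
    obtain ⟨u, rfl⟩ := hgu
    have h4 : (↑(u⁻¹) : Matrix (Fin (2 * r)) (Fin (2 * r)) (MvPolynomial (Fin n) C)) *ᵥ v = e0 := by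
      simp only [v]
      rw [Matrix.mulVec_mulVec, Units.inv_mul, Matrix.one_mulVec]
    have h5 := congrFun h4 k0
    have h6 : e0 k0 = 1 := by simp [e0]
    rw [h6] at h5
    apply hP.ne_top
    rw [Ideal.eq_top_iff_one, ← h5]
    simp only [Matrix.mulVec, dotProduct]
    exact Ideal.sum_mem _ fun j _ => P.mul_mem_left _ (h3 j)
  have hcol := col_red n D hdim (by simpa using hrD) x0 ⟨1, by omega⟩ ⟨2, by omega⟩
    (by simp [x0]) (by simp [x0]) (by simp) _ _ huv hqv
  obtain ⟨L1, hl1, hL1, f1, f2⟩ := reach_mat r hcol v rfl rfl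
  have hv1 : L1.prod *ᵥ v = e0 := lohi_ext r _ _ (by rw [f1, hlo0]) (by rw [f2, hhi0])
  let w := L1.prod *ᵥ (g *ᵥ el)
  have hiso1 : ∀ x, quadE r ((L1.prod * g) *ᵥ x) = quadE r x := by
    intro x; rw [← Matrix.mulVec_mulVec, hL1.2, hgq]
  have hfix1 := iso_fix r (L1.prod * g) hiso1 k0 (by rw [← Matrix.mulVec_mulVec]; exact hv1)
  have hw : hiE r w x0 = 1 := by
    have := hfix1 el
    rw [hneg0, ← Matrix.mulVec_mulVec] at this
    have h2 : el kl = 1 := by simp [el]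
    rw [h2] at this
    exact this
  obtain ⟨L2, hl2, hL2, g1, g2, g3⟩ := last_col r x0 e0 w
    (by intro j hj; rw [hlo0]; simp [hj]) hhi0 hw (Finset.univ.erase x0) (by simp)
  set h := (L2 ++ L1).prod * g with hh
  have hiso : ∀ x, quadE r (h *ᵥ x) = quadE r x := by
    intro x
    rw [hh, List.prod_append, ← Matrix.mulVec_mulVec, ← Matrix.mulVec_mulVec, hL2.2, hL1.2, hgq]
  have hhe0 : h *ᵥ e0 = e0 := by
    rw [hh, List.prod_append, ← Matrix.mulVec_mulVec, ← Matrix.mulVec_mulVec]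
    change L2.prod *ᵥ (L1.prod *ᵥ v) = e0
    rw [hv1, g1]
  have hhw : h *ᵥ el = L2.prod *ᵥ w := by
    rw [hh, List.prod_append, ← Matrix.mulVec_mulVec, ← Matrix.mulVec_mulVec]
  have hhel : h *ᵥ el = el := by
    rw [hhw]
    have hq0 : quadE r (L2.prod *ᵥ w) = 0 := by rw [← hhw, hiso, hqel]
    have hz : loE r (L2.prod *ᵥ w) x0 = 0 := by
      rw [quadE_eq, Finset.sum_eq_single x0] at hq0
      · rwa [g2, mul_one] at hq0
      · intro j _ hj
        rw [(g3 j (by simp [hj])).1, zero_mul]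
      · simp
    apply lohi_ext
    · rw [hlol]; funext j
      by_cases hj : j = x0
      · rw [hj, hz]; rfl
      · rw [(g3 j (by simp [hj])).1]; rfl
    · rw [hhil]; funext j
      by_cases hj : j = x0
      · rw [hj, g2]; simp
      · rw [(g3 j (by simp [hj])).2]; simp [hj]
  have hrowl : ∀ x, (h *ᵥ x) kl = x kl := by
    intro x; have := iso_fix r h hiso k0 hhe0 x; rwa [hneg0] at this
  have hrow0 : ∀ x, (h *ᵥ x) k0 = x k0 := by
    intro x; have := iso_fix r h hiso kl hhel x; rwa [hnegl] at this
  have ent : ∀ i j, h i j = (h *ᵥ Pi.single j 1) i := by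
    intro i j; simp [Matrix.mulVec_single_one, Matrix.col_apply]
  refine ⟨(L2 ++ L1).prod, ⟨L2 ++ L1, ?_, ?_, rfl⟩,
    fun i j => h ⟨i.val + 1, by omega⟩ ⟨j.val + 1, by omega⟩, ?_, ?_, ?_, ?_, ?_, ?_⟩
  · refine le_trans ?_ (bound_aux n D r hr3 hrD)
    rw [Finset.card_erase_of_mem (Finset.mem_univ _), Finset.card_univ, Fintype.card_fin] at hl2
    rw [Fintype.card_fin] at hl1
    rw [List.length_append]
    omega
  · intro M hM
    rcases List.mem_append.1 hM with hM | hM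
    · exact hL2.1 M hM
    · exact hL1.1 M hM
  · have hiso' : ∀ x : Fin (2 * (r - 1)) → MvPolynomial (Fin n) C,
        quadE (r - 1) (Matrix.mulVec (fun i j : Fin (2 * (r - 1)) =>
          h ⟨i.val + 1, by omega⟩ ⟨j.val + 1, by omega⟩) x) = quadE (r - 1) x := by
      intro x
      let Z : Fin (2 * r) → MvPolynomial (Fin n) C := fun k =>
        if hk : 0 < k.val ∧ k.val < 2 * r - 1 then x ⟨k.val - 1, by omega⟩ else 0
      have hZ0 : Z k0 = 0 := by simp [Z, hk0]
      have hZl : Z kl = 0 := by simp [Z, hkl]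
      have hZi : ∀ i : Fin (2 * (r - 1)), Z ⟨i.val + 1, by omega⟩ = x i := by
        intro i
        have : i.val + 1 < 2 * r - 1 := by omega
        simp [Z, this]
      rw [← quad_inner r (by omega) Z x hZ0 hZi, ← hiso Z]
      symm
      refine quad_inner r (by omega) (h *ᵥ Z) _ ((hrow0 Z).trans hZ0) fun i => ?_
      refine (sumE_inner r (by omega) _ ?_ ?_).trans ?_
      · change h _ k0 * Z k0 = 0
        rw [hZ0, mul_zero]
      · change h _ kl * Z kl = 0
        rw [hZl, mul_zero]
      · refine Finset.sum_congr rfl fun j _ => ?_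
        rw [hZi]
    exact ⟨iso_unit _ _ hiso', hiso'⟩
  · refine (ent _ _).trans ?_; rw [hrow0]; simp
  · refine (ent _ _).trans ?_; rw [hrowl]; simp
  · intro j hj
    have hj' : j ≠ k0 := fun hc => hj (by rw [hc])
    refine ⟨?_, ?_⟩
    · refine (ent _ _).trans ?_; rw [hrow0]; simp [hj'.symm]
    · refine (ent _ _).trans ?_; change (h *ᵥ e0) j = 0
      rw [hhe0]; simp [e0, hj']
  · intro j hj
    have hj' : j ≠ kl := fun hc => hj (by rw [hc])
    refine ⟨?_, ?_⟩
    · refine (ent _ _).trans ?_; rw [hrowl]; simp [hj'.symm]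
    · refine (ent _ _).trans ?_; change (h *ᵥ el) j = 0
      rw [hhel]; simp [el, hj']
  · intro i j; rfl
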